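/- Let 0 < K < 1/3 and let α ∈ (0,1) satisfy (1−K)α > 2/3. Then for every δ > 0 there exist ε > 0 and C > 0 such that the following holds: if (v,L) is a smooth solution of the expansion-normalized Euler system on [1,∞) × ℝ, 2π-periodic in x, whose initial data at t = 1 satisfy |v̄(1)| + ‖(v(1,·), L(1,·))‖₍₂₎ < ε, then ‖(v(t,·), L(t,·))‖₍₂₎ ≤ C · t^(−α(1−3K)/2 + δ) for all t ≥ 1. -/

import Mathlib

open MeasureTheory

/-- Partial derivative in the time variable of a function of `(t, x)`. -/
noncomputable def pderivT (f : ℝ → ℝ → ℝ) (t x : ℝ) : ℝ := deriv (fun s => f s x) t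

/-- Partial derivative in the space variable of a function of `(t, x)`. -/
noncomputable def pderivX (f : ℝ → ℝ → ℝ) (t x : ℝ) : ℝ := deriv (fun y => f t y) x

/-- The `L²` norm of a function over one period `[0, 2π]`. -/
noncomputable def L2normCirc (g : ℝ → ℝ) : ℝ :=
  Real.sqrt (∫ x in (0:ℝ)..(2 * Real.pi), (g x) ^ 2)

/-- The norm `‖(v,L)‖₍₂₎ = ‖∂ₓv‖_{L²} + ‖∂ₓ²v‖_{L²} + ‖∂ₓL‖_{L²} + ‖∂ₓ²L‖_{L²}`
at time `t`. -/
noncomputable def sobolevNorm2 (v L : ℝ → ℝ → ℝ) (t : ℝ) : ℝ :=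
  L2normCirc (fun x => deriv (v t) x) + L2normCirc (fun x => deriv (deriv (v t)) x)
    + L2normCirc (fun x => deriv (L t) x) + L2normCirc (fun x => deriv (deriv (L t)) x)

/-- The mean velocity `v̄(t) = ∫₀^{2π} v(t,x) dx`. -/
noncomputable def meanVel (v : ℝ → ℝ → ℝ) (t : ℝ) : ℝ :=
  ∫ x in (0:ℝ)..(2 * Real.pi), v t x

/-- The expansion-normalized relativistic Euler system on `[1,∞) × ℝ` with expansion
exponent `α` and (squared) sound speed `K`. -/
def IsEulerSolution (α K : ℝ) (v L : ℝ → ℝ → ℝ) : Prop :=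
  ∀ t, 1 ≤ t → ∀ x : ℝ,
    (pderivT v t x =
      -(α * (1 - 3 * K) / t) * v t x
      - t ^ (-α) * ((1 - K) / (1 - K * (v t x) ^ 2)) * v t x * pderivX v t x
      - t ^ (-α) * (K / (1 + K)) * ((1 - (v t x) ^ 2) ^ 2 / (1 - K * (v t x) ^ 2))
          * pderivX L t x
      + α * (1 - K) * (1 - 3 * K) * (t ^ (-α) / (1 - K * (v t x) ^ 2)) * (v t x) ^ 3)
    ∧ (pderivT L t x =
      -((1 + K) / (1 - K * (v t x) ^ 2)) * t ^ (-α) * pderivX v t x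
      - ((1 - K) / (1 - K * (v t x) ^ 2)) * t ^ (-α) * v t x * pderivX L t x
      + α * (1 + K) * (1 - 3 * K) * (t ^ (-α) / (1 - K * (v t x) ^ 2)) * (v t x) ^ 2)

/-!
Only the velocity is damped, at rate `a / t` with `a = α (1 - 3 K)`. Weighting the `v` part of the
energy by `(1 + K)² / K` and `(∂ₓ²L)²` by `(1 - v²)²` symmetrizes the system, so the top-order terms
of the energy identity form a total derivative, leaving the damping `-2 a / t` of the velocity part
and cubic errors. The time derivative of the mixed term `∫ v ∂ₓL - ∂ₓ²v ∂ₓL` dissipates the density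
at rate `t ^ (-α)`; adding it with a weight of size `t ^ (α - 1)` shares the damping between both
variables and gives a functional `Φ`, comparable to the squared norm, with
`Φ' ≤ (-a / t + C₁ t ^ (-α) √Φ + C₂ t ^ (α - 2)) Φ`. As long as `√Φ ≲ t ^ (-a / 2)` the error
coefficients are integrable on `[1, ∞)` because `α + a / 2 > 1`, which is `(1 - K) α > 2 / 3`, and
comparison with a barrier closes the bootstrap.
-/

section SlabCalculus

open Set Filter Function Topology

/-- `Cⁿ` regularity of a function of `(t, x)` on the closed slab `[1, ∞) × ℝ`, one-sided in time at
`t = 1`. -/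
def ContDiffSlab (n : WithTop ℕ∞) (F : ℝ → ℝ → ℝ) : Prop :=
  ContDiffOn ℝ n (uncurry F) (Ici 1 ×ˢ univ)

variable {F : ℝ → ℝ → ℝ} {n : WithTop ℕ∞} {t : ℝ}

theorem ContDiffSlab.of_le {m : WithTop ℕ∞} (hF : ContDiffSlab n F) (hmn : m ≤ n) :
    ContDiffSlab m F :=
  ContDiffOn.of_le hF hmn

theorem ContDiffSlab.contDiff_slice (hF : ContDiffSlab n F) (ht : 1 ≤ t) : ContDiff ℝ n (F t) :=
  ContDiffOn.comp_contDiff (f := fun x => (t, x)) hF (by fun_prop) fun x => ⟨ht, mem_univ x⟩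

theorem ContDiffSlab.contDiffAt (hF : ContDiffSlab n F) (ht : 1 < t) (x : ℝ) :
    ContDiffAt ℝ n (uncurry F) (t, x) :=
  ContDiffOn.contDiffAt hF (prod_mem_nhds (Ici_mem_nhds ht) univ_mem)

theorem hasDerivAt_time_fderiv {f : ℝ × ℝ → ℝ} {x : ℝ} (hf : DifferentiableAt ℝ f (t, x)) :
    HasDerivAt (fun s => f (s, x)) (fderiv ℝ f (t, x) (1, 0)) t :=
  hf.hasFDerivAt.comp_hasDerivAt t ((hasDerivAt_id t).prodMk (hasDerivAt_const t x))

theorem hasDerivAt_space_fderiv {f : ℝ × ℝ → ℝ} {x : ℝ} (hf : DifferentiableAt ℝ f (t, x)) :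
    HasDerivAt (fun y => f (t, y)) (fderiv ℝ f (t, x) (0, 1)) x :=
  hf.hasFDerivAt.comp_hasDerivAt x ((hasDerivAt_const x t).prodMk (hasDerivAt_id x))

protected theorem ContDiffSlab.pderivX (hF : ContDiffSlab (n + 1) F) :
    ContDiffSlab n (pderivX F) := by
  have hslab : UniqueDiffOn ℝ (Ici (1 : ℝ) ×ˢ (univ : Set ℝ)) :=
    (uniqueDiffOn_Ici 1).prod uniqueDiffOn_univ
  have hderiv := (ContDiffOn.fderivWithin hF hslab le_rfl).clm_apply
    (contDiffOn_const (c := ((0 : ℝ), (1 : ℝ))))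
  refine hderiv.congr ?_
  rintro ⟨t, x⟩ ⟨ht, -⟩
  have hline : HasDerivWithinAt (fun y : ℝ => (t, y)) ((0 : ℝ), (1 : ℝ)) univ x :=
    ((hasDerivAt_const x t).prodMk (hasDerivAt_id x)).hasDerivWithinAt
  have hcomp := (ContDiffOn.differentiableOn hF (by simp) (t, x)
    ⟨ht, mem_univ x⟩).hasFDerivWithinAt.comp_hasDerivWithinAt x hline fun y _ => ⟨ht, mem_univ y⟩
  exact (hasDerivWithinAt_univ.mp hcomp).deriv

theorem ContDiffSlab.hasDerivAt_pderivT (hF : ContDiffSlab 1 F) (ht : 1 < t) (x : ℝ) :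
    HasDerivAt (fun s => F s x) (pderivT F t x) t :=
  (hasDerivAt_time_fderiv
    ((hF.contDiffAt ht x).differentiableAt one_ne_zero)).differentiableAt.hasDerivAt

theorem ContDiffSlab.pderivT_eq_fderiv (hF : ContDiffSlab 1 F) (ht : 1 < t) (x : ℝ) :
    pderivT F t x = fderiv ℝ (uncurry F) (t, x) (1, 0) :=
  (hasDerivAt_time_fderiv ((hF.contDiffAt ht x).differentiableAt one_ne_zero)).deriv

theorem ContDiffSlab.pderivX_eq_fderiv (hF : ContDiffSlab 1 F) (ht : 1 < t) (x : ℝ) :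
    pderivX F t x = fderiv ℝ (uncurry F) (t, x) (0, 1) :=
  (hasDerivAt_space_fderiv ((hF.contDiffAt ht x).differentiableAt one_ne_zero)).deriv

theorem ContDiffSlab.continuousOn_pderivT (hF : ContDiffSlab 1 F) :
    ContinuousOn (uncurry (pderivT F)) (Ioi 1 ×ˢ univ) := by
  have hfderiv : ContinuousOn (fun p => fderiv ℝ (uncurry F) p (1, 0)) (Ioi 1 ×ˢ univ) := by
    rintro ⟨t, x⟩ ⟨ht, -⟩
    exact (((hF.contDiffAt ht x).fderiv_right (m := 0) (by simp)).clm_apply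
      contDiffAt_const).continuousAt.continuousWithinAt
  exact hfderiv.congr fun p hp => hF.pderivT_eq_fderiv hp.1 p.2

theorem ContDiffSlab.continuous_pderivT (hF : ContDiffSlab 1 F) (ht : 1 < t) :
    Continuous (pderivT F t) :=
  hF.continuousOn_pderivT.comp_continuous (f := fun x => (t, x)) (by fun_prop)
    fun x => ⟨ht, mem_univ x⟩

theorem ContDiffSlab.hasDerivAt_pderivT_space (hF : ContDiffSlab 2 F) (ht : 1 < t) (x : ℝ) :
    HasDerivAt (pderivT F t) (pderivT (pderivX F) t x) x := by
  set f := uncurry F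
  have hF₁ : ContDiffSlab 1 F := hF.of_le one_le_two
  have hf := hF.contDiffAt ht x
  have hf' : DifferentiableAt ℝ (fderiv ℝ f) (t, x) :=
    (hf.fderiv_right (m := 1) (by norm_num)).differentiableAt one_ne_zero
  have hXT := hasDerivAt_space_fderiv (hf'.clm_apply (differentiableAt_const ((1 : ℝ), (0 : ℝ))))
  have hTX := hasDerivAt_time_fderiv (hf'.clm_apply (differentiableAt_const ((0 : ℝ), (1 : ℝ))))
  have hpderivX : (fun s => pderivX F s x) =ᶠ[𝓝 t] fun s => fderiv ℝ f (s, x) (0, 1) := by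
    filter_upwards [Ioi_mem_nhds ht] with s hs using hF₁.pderivX_eq_fderiv hs x
  have hsymm := hf.isSymmSndFDerivAt (by rw [minSmoothness_of_isRCLikeNormedField])
  have hpderivT : pderivT F t = fun y => fderiv ℝ f (t, y) (1, 0) :=
    funext fun y => hF₁.pderivT_eq_fderiv ht y
  rw [hpderivT, pderivT, (hTX.congr_of_eventuallyEq hpderivX).deriv]
  convert hXT using 1
  simp only [fderiv_clm_apply hf' (differentiableAt_const _), fderiv_fun_const]
  simpa using hsymm.eq (1, 0) (0, 1)

theorem ContDiffSlab.hasDerivAt_deriv (hF : ContDiffSlab 2 F) (ht : 1 < t) (x : ℝ) :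
    HasDerivAt (fun s => deriv (F s) x) (deriv (pderivT F t) x) t :=
  (ContDiffSlab.pderivX (n := 1) hF).hasDerivAt_pderivT ht x |>.congr_deriv
    (hF.hasDerivAt_pderivT_space ht x).deriv.symm

theorem ContDiffSlab.hasDerivAt_deriv_deriv (hF : ContDiffSlab 3 F) (ht : 1 < t) (x : ℝ) :
    HasDerivAt (fun s => deriv (deriv (F s)) x) (deriv (deriv (pderivT F t)) x) t := by
  have hF₂ : ContDiffSlab 2 F := hF.of_le (by norm_num)
  have hcomm : deriv (pderivT F t) = pderivT (pderivX F) t :=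
    funext fun y => (hF₂.hasDerivAt_pderivT_space ht y).deriv
  rw [hcomm]
  exact (ContDiffSlab.pderivX (n := 2) hF).hasDerivAt_deriv ht x

theorem ContDiffSlab.continuousOn_integral (hF : ContDiffSlab n F) (a b : ℝ) :
    ContinuousOn (fun t => ∫ x in a..b, F t x) (Ici 1) := by
  have hext : Continuous (uncurry fun t x => F (max t 1) x) :=
    (ContDiffOn.continuousOn hF).comp_continuous (f := fun p : ℝ × ℝ => (max p.1 1, p.2))
      (by fun_prop) fun p => ⟨le_max_right p.1 1, mem_univ p.2⟩
  refine (intervalIntegral.continuous_parametric_intervalIntegral_of_continuous'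
    (μ := volume) hext a b).continuousOn.congr fun t ht => ?_
  simp only [max_eq_left (mem_Ici.mp ht)]

theorem ContDiffSlab.hasDerivAt_integral (hF : ContDiffSlab 1 F) (ht : 1 < t) (a b : ℝ) :
    HasDerivAt (fun t => ∫ x in a..b, F t x) (∫ x in a..b, pderivT F t x) t := by
  obtain ⟨c, hc1, hct⟩ := exists_between ht
  obtain ⟨C, hC⟩ := (isCompact_Icc.prod isCompact_uIcc).exists_bound_of_continuousOn
    (hF.continuousOn_pderivT.mono (prod_mono (fun s (hs : s ∈ Icc c (t + 1)) => hc1.trans_le hs.1)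
      (subset_univ (uIcc a b))))
  have hslice : ∀ s, 1 < s → Continuous (F s) := fun s hs => (hF.contDiff_slice hs.le).continuous
  refine (intervalIntegral.hasDerivAt_integral_of_dominated_loc_of_deriv_le (bound := fun _ => C)
    (Icc_mem_nhds hct (lt_add_one t)) ?_ ((hslice t ht).intervalIntegrable _ _)
    (hF.continuous_pderivT ht).aestronglyMeasurable ?_ intervalIntegrable_const ?_).2
  · filter_upwards [Ioi_mem_nhds ht] with s hs using (hslice s hs).aestronglyMeasurable
  · exact .of_forall fun x hx s hs => hC (s, x) ⟨hs, uIoc_subset_uIcc hx⟩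
  · exact .of_forall fun x _ s hs => hF.hasDerivAt_pderivT (hc1.trans_le hs.1) x

end SlabCalculus

section PeriodicFunctions

open Set Function Real intervalIntegral

variable {f u : ℝ → ℝ} {a b T : ℝ}

theorem deriv_periodic (hf : Periodic f T) : Periodic (deriv f) T := fun x => by
  rw [← deriv_comp_add_const, hf.funext]

theorem integral_deriv_eq_zero_of_periodic (hf : Periodic f T) (hdf : ContDiff ℝ 1 f) :
    ∫ x in (0 : ℝ)..T, deriv f x = 0 := by
  rw [integral_deriv_eq_sub (fun x _ => hdf.differentiable one_ne_zero x)
    ((hdf.continuous_deriv le_rfl).intervalIntegrable _ _), hf.eq, sub_self]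

theorem integral_le_of_le_deriv_add {g h : ℝ → ℝ} (hT : 0 ≤ T) (hf : Periodic f T)
    (hdf : ContDiff ℝ 1 f) (hg : Continuous g) (hh : Continuous h)
    (hle : ∀ x, h x ≤ deriv f x + g x) :
    ∫ x in (0 : ℝ)..T, h x ≤ ∫ x in (0 : ℝ)..T, g x := by
  have hdf' := hdf.continuous_deriv le_rfl
  calc ∫ x in (0 : ℝ)..T, h x ≤ ∫ x in (0 : ℝ)..T, (deriv f x + g x) :=
        integral_mono_on hT (hh.intervalIntegrable _ _) ((hdf'.add hg).intervalIntegrable _ _)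
          fun x _ => hle x
    _ = ∫ x in (0 : ℝ)..T, g x := by
        rw [integral_add (hdf'.intervalIntegrable _ _) (hg.intervalIntegrable _ _),
          integral_deriv_eq_zero_of_periodic hf hdf, zero_add]

theorem sq_integral_le_mul_integral_sq (hab : a ≤ b) (hf : Continuous f) :
    (∫ x in a..b, f x) ^ 2 ≤ (b - a) * ∫ x in a..b, f x ^ 2 := by
  set I := ∫ x in a..b, f x with hI
  have hexpand : ∫ x in a..b, ((b - a) * f x - I) ^ 2
      = (b - a) * ((b - a) * ∫ x in a..b, f x ^ 2) - (b - a) * I ^ 2 := by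
    have hpoint : ∀ x, ((b - a) * f x - I) ^ 2
        = (b - a) ^ 2 * f x ^ 2 - 2 * (b - a) * I * f x + I ^ 2 := fun x => by ring
    simp only [hpoint]
    rw [integral_add (Continuous.intervalIntegrable (by fun_prop) _ _)
        (Continuous.intervalIntegrable (by fun_prop) _ _),
      integral_sub (Continuous.intervalIntegrable (by fun_prop) _ _)
        (Continuous.intervalIntegrable (by fun_prop) _ _),
      intervalIntegral.integral_const_mul, intervalIntegral.integral_const_mul,
      intervalIntegral.integral_const, ← hI, smul_eq_mul]
    ring
  have hnonneg : 0 ≤ ∫ x in a..b, ((b - a) * f x - I) ^ 2 :=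
    integral_nonneg hab fun x _ => sq_nonneg _
  rcases hab.eq_or_lt with rfl | hlt
  · simp [hI]
  · exact le_of_mul_le_mul_left (by linarith) (sub_pos.mpr hlt)

theorem abs_sub_le_integral_abs_deriv {x y : ℝ} (hf : ContDiff ℝ 1 f) (hx : x ∈ Icc a b)
    (hy : y ∈ Icc a b) : |f x - f y| ≤ ∫ z in a..b, |deriv f z| := by
  wlog hxy : y ≤ x generalizing x y
  · rw [abs_sub_comm]
    exact this hy hx (le_of_not_ge hxy)
  have hf' := hf.continuous_deriv le_rfl
  rw [← integral_deriv_eq_sub (fun z _ => hf.differentiable one_ne_zero z)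
    (hf'.intervalIntegrable _ _)]
  exact (abs_integral_le_integral_abs hxy).trans (integral_mono_interval hy.1 hxy hx.2
    (.of_forall fun z => abs_nonneg _) (hf'.abs.intervalIntegrable _ _))

theorem sq_le_average_sq_add_of_periodic (hT : 0 < T) (hf : Periodic f T) (hdf : ContDiff ℝ 1 f)
    (x : ℝ) : f x ^ 2 ≤ 2 * (T⁻¹ * ∫ y in (0 : ℝ)..T, f y) ^ 2
      + 2 * T * ∫ y in (0 : ℝ)..T, deriv f y ^ 2 := by
  obtain ⟨x', hx', hfx⟩ := hf.exists_mem_Ico₀ hT x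
  obtain ⟨y, hy, hfy⟩ := exists_eq_interval_average hT.ne hdf.continuous.continuousOn
  rw [interval_average_eq, sub_zero, smul_eq_mul] at hfy
  have hy' : y ∈ Icc 0 T := by
    rw [uIoo_of_lt hT] at hy
    exact Ioo_subset_Icc_self hy
  have hcauchy := sq_integral_le_mul_integral_sq hT.le (hdf.continuous_deriv le_rfl).abs
  simp only [sq_abs, sub_zero] at hcauchy
  have hosc : (f x - f y) ^ 2 ≤ T * ∫ z in (0 : ℝ)..T, deriv f z ^ 2 := by
    rw [hfx, ← sq_abs]
    exact (pow_le_pow_left₀ (abs_nonneg _)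
      (abs_sub_le_integral_abs_deriv hdf (Ico_subset_Icc_self hx') hy') 2).trans hcauchy
  rw [← hfy]
  linarith [sq_nonneg (f x - 2 * f y)]

theorem L2normCirc_sq (g : ℝ → ℝ) : L2normCirc g ^ 2 = ∫ x in (0 : ℝ)..2 * π, g x ^ 2 :=
  sq_sqrt (integral_nonneg two_pi_pos.le fun x _ => sq_nonneg (g x))

theorem sq_le_integral_sq_add_L2normCirc_deriv (hu : Periodic u (2 * π)) (hdu : ContDiff ℝ 1 u)
    (x : ℝ) : u x ^ 2 ≤ (∫ y in (0 : ℝ)..2 * π, u y) ^ 2 / 18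
      + 4 * π * L2normCirc (deriv u) ^ 2 := by
  have hsob := sq_le_average_sq_add_of_periodic two_pi_pos hu hdu x
  have hinv : (2 * π)⁻¹ ≤ 6⁻¹ := inv_anti₀ (by norm_num) (by linarith [pi_gt_three])
  have hmean : ((2 * π)⁻¹ * ∫ y in (0 : ℝ)..2 * π, u y) ^ 2
      ≤ (∫ y in (0 : ℝ)..2 * π, u y) ^ 2 / 36 := by
    rw [mul_pow, div_eq_inv_mul]
    gcongr
    calc ((2 * π)⁻¹) ^ 2 ≤ (6⁻¹) ^ 2 := by gcongr
      _ = 36⁻¹ := by norm_num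
  rw [L2normCirc_sq]
  linarith

theorem sq_le_sixteen_mul_L2normCirc_deriv (hu : Periodic u (2 * π)) (hdu : ContDiff ℝ 2 u)
    (x : ℝ) : deriv u x ^ 2 ≤ 16 * L2normCirc (deriv (deriv u)) ^ 2 := by
  have hsob := sq_le_integral_sq_add_L2normCirc_deriv (deriv_periodic hu)
    (ContDiff.deriv' (n := 1) hdu) x
  rw [integral_deriv_eq_zero_of_periodic hu (hdu.of_le (by norm_num))] at hsob
  nlinarith [pi_lt_four, sq_nonneg (L2normCirc (deriv (deriv u)))]

theorem L2normCirc_sq_le_integral_sq_add (hu : Periodic u (2 * π)) (hdu : ContDiff ℝ 1 u) :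
    L2normCirc u ^ 2 ≤ (∫ x in (0 : ℝ)..2 * π, u x) ^ 2 + 80 * L2normCirc (deriv u) ^ 2 := by
  have hcont : Continuous fun x => u x ^ 2 := hdu.continuous.pow 2
  have hmono := integral_mono_on (μ := volume) two_pi_pos.le (hcont.intervalIntegrable _ _)
    intervalIntegrable_const fun x _ => sq_le_integral_sq_add_L2normCirc_deriv hu hdu x
  rw [← L2normCirc_sq, intervalIntegral.integral_const, smul_eq_mul, sub_zero] at hmono
  have hpi := pi_lt_d2
  have hpi0 := pi_pos
  have hpi2 : π ^ 2 ≤ 10 := by nlinarith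
  calc L2normCirc u ^ 2
      ≤ π / 9 * (∫ x in (0 : ℝ)..2 * π, u x) ^ 2 + 8 * π ^ 2 * L2normCirc (deriv u) ^ 2 := by
        linarith
    _ ≤ 1 * (∫ x in (0 : ℝ)..2 * π, u x) ^ 2 + 8 * 10 * L2normCirc (deriv u) ^ 2 := by
        gcongr
        linarith
    _ = _ := by ring

end PeriodicFunctions

section Barrier

open Real Set Filter Topology

variable {a D β r t : ℝ}

theorem le_of_deriv_lt_deriv_of_eq {f b b' : ℝ → ℝ} (hf : ContinuousOn f (Ici a))
    (hf' : ∀ t, a < t → DifferentiableAt ℝ f t) (hb : ∀ t, a ≤ t → HasDerivAt b (b' t) t)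
    (hab : f a < b a) (hlt : ∀ t, a < t → f t = b t → deriv f t < b' t) (ht : a ≤ t) :
    f t ≤ b t := by
  rcases ht.eq_or_lt with rfl | hat
  · exact hab.le
  have hnear : ∀ᶠ s in 𝓝[>] a, f s < b s :=
    ((hf a self_mem_Ici).mono Ioi_subset_Ici_self).eventually_lt
      (hb a le_rfl).continuousAt.continuousWithinAt hab
  obtain ⟨t₀, hfb, hat₀, ht₀⟩ := (hnear.and (Ioo_mem_nhdsGT hat)).exists
  have hlater : ∀ {s}, t₀ ≤ s → a < s := hat₀.trans_le
  exact image_le_of_deriv_right_lt_deriv_boundary'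
    (hf.mono fun s hs => (hlater hs.1).le)
    (fun s hs => (hf' s (hlater hs.1)).hasDerivAt.hasDerivWithinAt) hfb.le
    (fun s hs => (hb s (hlater hs.1).le).continuousAt.continuousWithinAt)
    (fun s hs => (hb s (hlater hs.1).le).hasDerivWithinAt)
    (fun s hs => hlt s (hlater hs.1)) (right_mem_Icc.mpr ht₀.le)

/-- A supersolution of the differential inequality for the Lyapunov functional: the profile
`r² t⁻ᵃ` damped by a factor whose logarithmic derivative `D (β - 1) t^(-β)` absorbs the
perturbation. -/
noncomputable def decayBarrier (r a D β t : ℝ) : ℝ :=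
  r ^ 2 * (t ^ (-a) * exp (-D * t ^ (1 - β)))

theorem decayBarrier_pos (hr : 0 < r) (ht : 0 < t) : 0 < decayBarrier r a D β t := by
  unfold decayBarrier
  positivity

theorem decayBarrier_le (hD : 0 ≤ D) (ht : 0 < t) : decayBarrier r a D β t ≤ r ^ 2 * t ^ (-a) := by
  have hexp : exp (-D * t ^ (1 - β)) ≤ 1 := exp_le_one_iff.mpr
    (mul_nonpos_of_nonpos_of_nonneg (neg_nonpos.mpr hD) (rpow_nonneg ht.le _))
  exact mul_le_mul_of_nonneg_left (mul_le_of_le_one_right (rpow_nonneg ht.le _) hexp) (sq_nonneg r)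

theorem hasDerivAt_decayBarrier (ht : 0 < t) :
    HasDerivAt (decayBarrier r a D β)
      (-(a / t) * decayBarrier r a D β t + D * (β - 1) * t ^ (-β) * decayBarrier r a D β t) t := by
  have hpow := hasDerivAt_rpow_const (p := -a) (.inl ht.ne')
  have hexp := ((hasDerivAt_rpow_const (p := 1 - β) (.inl ht.ne')).const_mul (-D)).exp
  refine ((hpow.mul hexp).const_mul (r ^ 2)).congr_deriv ?_
  rw [rpow_sub_one ht.ne', show 1 - β - 1 = -β by ring, decayBarrier]
  ring

theorem sqrt_decayBarrier_le (hD : 0 ≤ D) (hr : 0 ≤ r) (ht : 0 < t) :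
    √(decayBarrier r a D β t) ≤ r * t ^ (-(a / 2)) := by
  refine sqrt_le_iff.mpr ⟨by positivity, (decayBarrier_le hD ht).trans_eq ?_⟩
  rw [mul_pow, ← rpow_mul_natCast ht.le]
  ring_nf

theorem exists_decay_threshold {p q C₁ C₂ : ℝ} (ha : 0 ≤ a) (hp : 1 < p + a / 2) (hq : 1 < q)
    (hr : 0 < r) (hC₁ : 0 ≤ C₁) (hC₂ : 0 ≤ C₂) :
    ∃ η > 0, ∀ Φ : ℝ → ℝ, ContinuousOn Φ (Ici 1) → (∀ t, 1 < t → DifferentiableAt ℝ Φ t) →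
      (∀ t, 1 < t → √(Φ t) ≤ r → deriv Φ t ≤ -(a / t) * Φ t
        + (C₁ * (t ^ (-p) * √(Φ t)) + C₂ * t ^ (-q)) * Φ t) →
      Φ 1 < η → ∀ t, 1 ≤ t → Φ t ≤ r ^ 2 * t ^ (-a) := by
  obtain ⟨β, hβ1, hβ⟩ := exists_between (lt_min hp hq)
  obtain ⟨hβp, hβq⟩ := lt_min_iff.mp hβ
  set D := (C₁ * r + C₂ + 1) / (β - 1)
  have hDβ : D * (β - 1) = C₁ * r + C₂ + 1 := div_mul_cancel₀ _ (sub_pos.mpr hβ1).ne'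
  have hD0 : 0 ≤ D := div_nonneg (by positivity) (sub_pos.mpr hβ1).le
  refine ⟨decayBarrier r a D β 1, decayBarrier_pos hr one_pos,
    fun Φ hcont hdiff hineq hΦ1 t ht => ?_⟩
  refine (le_of_deriv_lt_deriv_of_eq hcont hdiff
    (fun s hs => hasDerivAt_decayBarrier (zero_lt_one.trans_le hs)) hΦ1
    (fun s hs htouch => ?_) ht).trans (decayBarrier_le hD0 (zero_lt_one.trans_le ht))
  have hs0 : 0 < s := zero_lt_one.trans hs
  have hsqrt : √(Φ s) ≤ r * s ^ (-(a / 2)) := htouch ▸ sqrt_decayBarrier_le hD0 hr.le hs0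
  have hsmall : √(Φ s) ≤ r := hsqrt.trans <| mul_le_of_le_one_right hr.le <|
    rpow_le_one_of_one_le_of_nonpos hs.le (by linarith)
  have hquad : s ^ (-p) * √(Φ s) ≤ r * s ^ (-β) :=
    calc s ^ (-p) * √(Φ s) ≤ s ^ (-p) * (r * s ^ (-(a / 2))) := by gcongr
      _ = r * s ^ (-p + -(a / 2)) := by rw [rpow_add hs0]; ring
      _ ≤ r * s ^ (-β) := by
        gcongr
        · exact hs.le
        · linarith
  have hlin : s ^ (-q) ≤ s ^ (-β) := rpow_le_rpow_of_exponent_le hs.le (by linarith)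
  have hpert : C₁ * (s ^ (-p) * √(Φ s)) + C₂ * s ^ (-q) < D * (β - 1) * s ^ (-β) :=
    calc C₁ * (s ^ (-p) * √(Φ s)) + C₂ * s ^ (-q) ≤ C₁ * (r * s ^ (-β)) + C₂ * s ^ (-β) := by
          gcongr
      _ < (C₁ * r + C₂ + 1) * s ^ (-β) := by linarith [rpow_pos_of_pos hs0 (-β)]
      _ = D * (β - 1) * s ^ (-β) := by rw [hDβ]
  calc deriv Φ s ≤ -(a / s) * Φ s + (C₁ * (s ^ (-p) * √(Φ s)) + C₂ * s ^ (-q)) * Φ s :=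
        hineq s hs hsmall
    _ < -(a / s) * Φ s + D * (β - 1) * s ^ (-β) * Φ s := by
        gcongr
        exact htouch ▸ decayBarrier_pos hr hs0
    _ = _ := by rw [htouch]

end Barrier

section Coefficients

open Set Filter Topology

/-- A coefficient of the quasilinear system: `C²` on `(-1, 1)`, with first two derivatives bounded
by `B` on `[-1/2, 1/2]`. -/
structure BoundedC2 (B : ℝ) (φ : ℝ → ℝ) : Prop where
  contDiffOn : ContDiffOn ℝ 2 φ (Ioo (-1) 1)
  abs_deriv_le : ∀ u, |u| ≤ 1 / 2 → |deriv φ u| ≤ B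
  abs_deriv_deriv_le : ∀ u, |u| ≤ 1 / 2 → |deriv (deriv φ) u| ≤ B

variable {φ : ℝ → ℝ} {B u : ℝ}

theorem mem_Ioo_of_abs_le_half (hu : |u| ≤ 1 / 2) : u ∈ Ioo (-1 : ℝ) 1 :=
  ⟨by linarith [(abs_le.mp hu).1], by linarith [(abs_le.mp hu).2]⟩

theorem abs_sub_apply_zero_le (hφ : ∀ x, |x| ≤ 1 / 2 → DifferentiableAt ℝ φ x) {C : ℝ}
    (hC : ∀ x, |x| ≤ |u| → |deriv φ x| ≤ C) (hu : |u| ≤ 1 / 2) : |φ u - φ 0| ≤ C * |u| := by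
  have hmem : ∀ {x}, x ∈ Icc (-|u|) |u| → |x| ≤ |u| := abs_le.mpr
  simpa using Convex.norm_image_sub_le_of_norm_deriv_le (f := φ) (C := C)
    (fun x hx => hφ x ((hmem hx).trans hu)) (fun x hx => hC x (hmem hx))
    (convex_Icc (-|u|) |u|) (x := 0) (y := u) ⟨by simp, by simp⟩ (abs_le.mp le_rfl)

theorem eventually_boundedC2 (hφ : ContDiffOn ℝ 2 φ (Ioo (-1) 1)) :
    ∀ᶠ B in atTop, BoundedC2 B φ := by
  have hsub : Icc (-(1 / 2) : ℝ) (1 / 2) ⊆ Ioo (-1) 1 := fun x hx =>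
    mem_Ioo_of_abs_le_half (abs_le.mpr hx)
  have hφ' := hφ.deriv_of_isOpen (m := 1) isOpen_Ioo (by norm_num)
  have hφ'' := hφ'.deriv_of_isOpen (m := 0) isOpen_Ioo (by norm_num)
  obtain ⟨B₁, hB₁⟩ := isCompact_Icc.exists_bound_of_continuousOn (hφ'.continuousOn.mono hsub)
  obtain ⟨B₂, hB₂⟩ := isCompact_Icc.exists_bound_of_continuousOn (hφ''.continuousOn.mono hsub)
  filter_upwards [eventually_ge_atTop B₁, eventually_ge_atTop B₂] with B h₁ h₂
  exact ⟨hφ, fun u hu => (hB₁ u (abs_le.mp hu)).trans h₁,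
    fun u hu => (hB₂ u (abs_le.mp hu)).trans h₂⟩

namespace BoundedC2

theorem differentiableAt (hφ : BoundedC2 B φ) (hu : |u| ≤ 1 / 2) : DifferentiableAt ℝ φ u :=
  (hφ.contDiffOn.contDiffAt (isOpen_Ioo.mem_nhds (mem_Ioo_of_abs_le_half hu))).differentiableAt
    two_ne_zero

theorem differentiableAt_deriv (hφ : BoundedC2 B φ) (hu : |u| ≤ 1 / 2) :
    DifferentiableAt ℝ (deriv φ) u :=
  ((hφ.contDiffOn.deriv_of_isOpen (m := 1) isOpen_Ioo (by norm_num)).contDiffAt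
    (isOpen_Ioo.mem_nhds (mem_Ioo_of_abs_le_half hu))).differentiableAt one_ne_zero

theorem abs_sub_apply_zero_le (hφ : BoundedC2 B φ) (hu : |u| ≤ 1 / 2) :
    |φ u - φ 0| ≤ B * |u| :=
  _root_.abs_sub_apply_zero_le (fun _ => hφ.differentiableAt)
    (fun x hx => hφ.abs_deriv_le x (hx.trans hu)) hu

theorem abs_deriv_le_mul (hφ : BoundedC2 B φ) (h0 : deriv φ 0 = 0) (hu : |u| ≤ 1 / 2) :
    |deriv φ u| ≤ B * |u| := by
  simpa [h0] using _root_.abs_sub_apply_zero_le (fun _ => hφ.differentiableAt_deriv)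
    (fun x hx => hφ.abs_deriv_deriv_le x (hx.trans hu)) hu

theorem abs_le_mul_sq (hφ : BoundedC2 B φ) (h0 : φ 0 = 0) (h0' : deriv φ 0 = 0)
    (hu : |u| ≤ 1 / 2) : |φ u| ≤ B * |u| ^ 2 := by
  have hB : 0 ≤ B := (abs_nonneg _).trans (hφ.abs_deriv_le u hu)
  have hbound : ∀ x, |x| ≤ |u| → |deriv φ x| ≤ B * |u| := fun x hx =>
    (hφ.abs_deriv_le_mul h0' (hx.trans hu)).trans (by gcongr)
  simpa [h0, pow_two, mul_assoc] using
    _root_.abs_sub_apply_zero_le (fun _ => hφ.differentiableAt) hbound hu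

section Composition

variable {w : ℝ → ℝ} (hφ : BoundedC2 B φ) (hw : ContDiff ℝ 2 w) (hw' : ∀ x, |w x| ≤ 1 / 2)
include hφ hw hw'

theorem hasDerivAt_comp (x : ℝ) :
    HasDerivAt (fun x => φ (w x)) (deriv φ (w x) * deriv w x) x :=
  (hφ.differentiableAt (hw' x)).hasDerivAt.comp x (hw.differentiable two_ne_zero x).hasDerivAt

theorem hasDerivAt_deriv_comp (x : ℝ) :
    HasDerivAt (fun x => deriv φ (w x) * deriv w x)
      (deriv (deriv φ) (w x) * deriv w x ^ 2 + deriv φ (w x) * deriv (deriv w) x) x := by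
  have hw₁ : Differentiable ℝ (deriv w) := hw.differentiable_deriv_two
  refine (((hφ.differentiableAt_deriv (hw' x)).hasDerivAt.comp x
    (hw.differentiable two_ne_zero x).hasDerivAt).mul (hw₁ x).hasDerivAt).congr_deriv ?_
  rw [Function.comp_apply]
  ring

theorem contDiff_comp : ContDiff ℝ 2 fun x => φ (w x) :=
  hφ.contDiffOn.comp_contDiff hw fun x => mem_Ioo_of_abs_le_half (hw' x)

end Composition

end BoundedC2

/-- The coefficients of one equation of the system in transport form: advection `m`, coupling `c`
and source `h`, normalized so that the linearization at the quiet fluid has no advection, unit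
coupling and no source. -/
structure TransportCoeffs (B : ℝ) (m c h : ℝ → ℝ) : Prop where
  advection : BoundedC2 B m
  coupling : BoundedC2 B c
  source : BoundedC2 B h
  advection_zero : m 0 = 0
  coupling_zero : c 0 = 1
  source_zero : h 0 = 0
  deriv_source_zero : deriv h 0 = 0

/-- The time derivative of `y` prescribed by the equation
`∂ₜy = -d y - T (m(u) ∂ₓy + κ c(u) ∂ₓz - h(u))`, the common form of the two Euler equations. -/
noncomputable def transportRate (m c h : ℝ → ℝ) (d T κ : ℝ) (u y z : ℝ → ℝ) (x : ℝ) : ℝ :=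
  -d * y x - T * (m (u x) * deriv y x + κ * (c (u x) * deriv z x) - h (u x))

/-- Bounds at `x` on the derivatives of `f`: the small bound `s` on the first one, the size `R` on
the first two. -/
structure JetBound (s R : ℝ) (f : ℝ → ℝ) (x : ℝ) : Prop where
  abs_deriv_le_small : |deriv f x| ≤ s
  abs_deriv_le : |deriv f x| ≤ R
  abs_deriv_deriv_le : |deriv (deriv f) x| ≤ R

section TransportRate

variable {m c h : ℝ → ℝ} {d T κ : ℝ} {w y z : ℝ → ℝ}

theorem deriv_transportRate (hcoef : TransportCoeffs B m c h) (hw : ContDiff ℝ 2 w)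
    (hw' : ∀ x, |w x| ≤ 1 / 2) (hy : ContDiff ℝ 2 y) (hz : ContDiff ℝ 2 z) :
    deriv (transportRate m c h d T κ w y z) = fun x => -d * deriv y x
      - T * (deriv m (w x) * deriv w x * deriv y x + m (w x) * deriv (deriv y) x
        + κ * (deriv c (w x) * deriv w x * deriv z x + c (w x) * deriv (deriv z) x)
        - deriv h (w x) * deriv w x) := by
  funext x
  have hy' := (hy.differentiable_deriv_two x).hasDerivAt
  have hz' := (hz.differentiable_deriv_two x).hasDerivAt
  exact (((hy.differentiable two_ne_zero x).hasDerivAt.const_mul (-d)).sub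
    (((((hcoef.advection.hasDerivAt_comp hw hw' x).mul hy').add
      (((hcoef.coupling.hasDerivAt_comp hw hw' x).mul hz').const_mul κ)).sub
      (hcoef.source.hasDerivAt_comp hw hw' x)).const_mul T)).deriv

theorem deriv_deriv_transportRate (hcoef : TransportCoeffs B m c h) (hw : ContDiff ℝ 2 w)
    (hw' : ∀ x, |w x| ≤ 1 / 2) (hy : ContDiff ℝ 3 y) (hz : ContDiff ℝ 3 z) :
    deriv (deriv (transportRate m c h d T κ w y z)) = fun x => -d * deriv (deriv y) x
      - T * ((deriv (deriv m) (w x) * deriv w x ^ 2 + deriv m (w x) * deriv (deriv w) x) * deriv y x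
          + 2 * (deriv m (w x) * deriv w x * deriv (deriv y) x)
          + m (w x) * deriv (deriv (deriv y)) x
        + κ * ((deriv (deriv c) (w x) * deriv w x ^ 2 + deriv c (w x) * deriv (deriv w) x)
            * deriv z x + 2 * (deriv c (w x) * deriv w x * deriv (deriv z) x)
          + c (w x) * deriv (deriv (deriv z)) x)
        - (deriv (deriv h) (w x) * deriv w x ^ 2 + deriv h (w x) * deriv (deriv w) x)) := by
  rw [deriv_transportRate hcoef hw hw' (hy.of_le (by norm_num)) (hz.of_le (by norm_num))]
  funext x
  have hjet : ∀ {f : ℝ → ℝ}, ContDiff ℝ 3 f → HasDerivAt (deriv f) (deriv (deriv f) x) x ∧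
      HasDerivAt (deriv (deriv f)) (deriv (deriv (deriv f)) x) x := fun hf =>
    have hf' : ContDiff ℝ 2 (deriv _) := ContDiff.deriv' hf
    ⟨(hf'.differentiable two_ne_zero x).hasDerivAt, (hf'.differentiable_deriv_two x).hasDerivAt⟩
  have hterm : ∀ {φ f : ℝ → ℝ}, BoundedC2 B φ → ContDiff ℝ 3 f → HasDerivAt
      (fun x => deriv φ (w x) * deriv w x * deriv f x + φ (w x) * deriv (deriv f) x)
      ((deriv (deriv φ) (w x) * deriv w x ^ 2 + deriv φ (w x) * deriv (deriv w) x) * deriv f x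
        + 2 * (deriv φ (w x) * deriv w x * deriv (deriv f) x)
        + φ (w x) * deriv (deriv (deriv f)) x) x := fun hφ hf => by
    refine (((hφ.hasDerivAt_deriv_comp hw hw' x).mul (hjet hf).1).add
      ((hφ.hasDerivAt_comp hw hw' x).mul (hjet hf).2)).congr_deriv ?_
    ring
  exact (((hjet hy).1.const_mul (-d)).sub ((((hterm hcoef.advection hy).add
    ((hterm hcoef.coupling hz).const_mul κ)).sub
    (hcoef.source.hasDerivAt_deriv_comp hw hw' x)).const_mul T)).deriv

section Remainder

variable {f : ℝ → ℝ} {s R x : ℝ}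

theorem abs_mul_add_mul_sub_le {a b e p q r : ℝ} (hT : 0 ≤ T) (hκ0 : 0 ≤ κ) (hκ2 : κ ≤ 2)
    (ha : |a| ≤ p) (hb : |b| ≤ q) (he : |e| ≤ r) :
    |T * (a + κ * b - e)| ≤ T * (p + 2 * q + r) := by
  have hκb : |κ * b| ≤ 2 * q := by
    rw [abs_mul, abs_of_nonneg hκ0]
    gcongr
  rw [abs_mul, abs_of_nonneg hT]
  gcongr
  calc |a + κ * b - e| ≤ |a| + |κ * b| + |e| := by grw [abs_sub, abs_add_le]
    _ ≤ p + 2 * q + r := by gcongr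

theorem BoundedC2.nonneg (hφ : BoundedC2 B φ) : 0 ≤ B :=
  (abs_nonneg _).trans (hφ.abs_deriv_le 0 (by norm_num))

theorem BoundedC2.abs_deriv_comp_mul_le (hφ : BoundedC2 B φ) (hs : |w x| ≤ s) (hs2 : s ≤ 1 / 2)
    (hw : JetBound s R w x) (hf : JetBound s R f x) :
    |deriv φ (w x) * deriv w x * deriv f x + (φ (w x) - φ 0) * deriv (deriv f) x|
      ≤ 2 * (B * s * R) := by
  have hB := hφ.nonneg
  have hs0 := (abs_nonneg _).trans hs
  have hφ' := hφ.abs_deriv_le _ (hs.trans hs2)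
  have hφ0 := hφ.abs_sub_apply_zero_le (hs.trans hs2)
  calc _ ≤ |deriv φ (w x)| * |deriv w x| * |deriv f x|
        + |φ (w x) - φ 0| * |deriv (deriv f) x| :=
          (abs_add_le _ _).trans_eq (by simp only [abs_mul])
    _ ≤ B * s * R + B * s * R := by
        gcongr
        exacts [hw.abs_deriv_le_small, hf.abs_deriv_le, hφ0.trans (by gcongr),
          hf.abs_deriv_deriv_le]
    _ = 2 * (B * s * R) := by ring

theorem BoundedC2.abs_deriv_deriv_comp_le (hφ : BoundedC2 B φ) (hwx : |w x| ≤ 1 / 2) (hs : s ≤ 1)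
    (hw : JetBound s R w x) :
    |deriv (deriv φ) (w x) * deriv w x ^ 2 + deriv φ (w x) * deriv (deriv w) x| ≤ 2 * (B * R) := by
  have hB := hφ.nonneg
  have hR := (abs_nonneg _).trans hw.abs_deriv_le
  calc _ ≤ |deriv (deriv φ) (w x)| * (|deriv w x| * |deriv w x|)
        + |deriv φ (w x)| * |deriv (deriv w) x| :=
          (abs_add_le _ _).trans_eq (by simp only [abs_mul, pow_two])
    _ ≤ B * (1 * R) + B * R := by
        gcongr
        exacts [hφ.abs_deriv_deriv_le _ hwx, hw.abs_deriv_le_small.trans hs, hw.abs_deriv_le,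
          hφ.abs_deriv_le _ hwx, hw.abs_deriv_deriv_le]
    _ = 2 * (B * R) := by ring

theorem BoundedC2.abs_deriv_deriv_comp_mul_le (hφ : BoundedC2 B φ) (hwx : |w x| ≤ 1 / 2)
    (hs : s ≤ 1) (hw : JetBound s R w x) (hf : JetBound s R f x) :
    |(deriv (deriv φ) (w x) * deriv w x ^ 2 + deriv φ (w x) * deriv (deriv w) x) * deriv f x
      + 2 * (deriv φ (w x) * deriv w x * deriv (deriv f) x)| ≤ 4 * (B * s * R) := by
  have hB := hφ.nonneg
  have hs0 := (abs_nonneg _).trans hw.abs_deriv_le_small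
  have hR0 := (abs_nonneg _).trans hw.abs_deriv_le
  have hφ'' := hφ.abs_deriv_deriv_comp_le hwx hs hw
  set g := deriv (deriv φ) (w x) * deriv w x ^ 2 + deriv φ (w x) * deriv (deriv w) x
  calc _ ≤ |g| * |deriv f x|
        + 2 * (|deriv φ (w x)| * |deriv w x| * |deriv (deriv f) x|) :=
          (abs_add_le _ _).trans_eq (by simp only [abs_mul, abs_two, g])
    _ ≤ 2 * (B * R) * s + 2 * (B * s * R) := by
        gcongr
        exacts [hf.abs_deriv_le_small, hφ.abs_deriv_le _ hwx, hw.abs_deriv_le_small,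
          hf.abs_deriv_deriv_le]
    _ = 4 * (B * s * R) := by ring

theorem BoundedC2.abs_deriv_mul_le_of_deriv_zero (hφ : BoundedC2 B φ) (h0 : deriv φ 0 = 0)
    {e : ℝ} (hs : |w x| ≤ s) (hs2 : s ≤ 1 / 2) (he : |e| ≤ R) :
    |deriv φ (w x) * e| ≤ B * s * R := by
  have hB := hφ.nonneg
  have hs0 := (abs_nonneg _).trans hs
  rw [abs_mul]
  gcongr
  exact (hφ.abs_deriv_le_mul h0 (hs.trans hs2)).trans (by gcongr)

theorem abs_transportRate_add_le (hcoef : TransportCoeffs B m c h) (hT : 0 ≤ T) (hκ0 : 0 ≤ κ)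
    (hκ2 : κ ≤ 2) (hs : |w x| ≤ s) (hs2 : s ≤ 1 / 2) (hR : |w x| ≤ R) (hy : |deriv y x| ≤ R)
    (hz : |deriv z x| ≤ R) :
    |transportRate m c h d T κ w y z x + d * y x + T * κ * deriv z x| ≤ T * (4 * (B * s * R)) := by
  have hB := hcoef.advection.nonneg
  have hs0 := (abs_nonneg _).trans hs
  have hws := hs.trans hs2
  have hcomp : ∀ {φ : ℝ → ℝ} {e : ℝ}, BoundedC2 B φ → |e| ≤ R →
      |(φ (w x) - φ 0) * e| ≤ B * s * R := fun hφ he => by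
    rw [abs_mul]
    gcongr
    exact (hφ.abs_sub_apply_zero_le hws).trans (by gcongr)
  have hsource : |h (w x)| ≤ B * s * R := by
    refine (hcoef.source.abs_le_mul_sq hcoef.source_zero hcoef.deriv_source_zero hws).trans ?_
    rw [pow_two, ← mul_assoc]
    gcongr
  have hrem := abs_mul_add_mul_sub_le hT hκ0 hκ2 (hcomp hcoef.advection hy)
    (hcomp hcoef.coupling hz) hsource
  rw [hcoef.advection_zero, hcoef.coupling_zero] at hrem
  rw [transportRate, ← abs_neg]
  convert hrem using 2 <;> ring

theorem abs_deriv_transportRate_add_le (hcoef : TransportCoeffs B m c h) (hT : 0 ≤ T)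
    (hκ0 : 0 ≤ κ) (hκ2 : κ ≤ 2) (hw : ContDiff ℝ 2 w) (hws : ∀ x, |w x| ≤ s) (hs2 : s ≤ 1 / 2)
    (hy : ContDiff ℝ 2 y) (hz : ContDiff ℝ 2 z) (hwR : JetBound s R w x) (hyR : JetBound s R y x)
    (hzR : JetBound s R z x) :
    |deriv (transportRate m c h d T κ w y z) x + d * deriv y x + T * κ * deriv (deriv z) x|
      ≤ T * (7 * (B * s * R)) := by
  have hrem := abs_mul_add_mul_sub_le hT hκ0 hκ2
    (hcoef.advection.abs_deriv_comp_mul_le (hws x) hs2 hwR hyR)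
    (hcoef.coupling.abs_deriv_comp_mul_le (hws x) hs2 hwR hzR)
    (hcoef.source.abs_deriv_mul_le_of_deriv_zero hcoef.deriv_source_zero (hws x) hs2
      hwR.abs_deriv_le)
  rw [hcoef.advection_zero, hcoef.coupling_zero] at hrem
  rw [deriv_transportRate hcoef hw (fun x => (hws x).trans hs2) hy hz, ← abs_neg]
  convert hrem using 2 <;> ring

theorem abs_deriv_deriv_transportRate_add_le (hcoef : TransportCoeffs B m c h) (hT : 0 ≤ T)
    (hκ0 : 0 ≤ κ) (hκ2 : κ ≤ 2) (hw : ContDiff ℝ 2 w) (hws : ∀ x, |w x| ≤ s) (hs2 : s ≤ 1 / 2)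
    (hy : ContDiff ℝ 3 y) (hz : ContDiff ℝ 3 z) (hwR : JetBound s R w x) (hyR : JetBound s R y x)
    (hzR : JetBound s R z x) :
    |deriv (deriv (transportRate m c h d T κ w y z)) x + d * deriv (deriv y) x
        + T * (m (w x) * deriv (deriv (deriv y)) x + κ * (c (w x) * deriv (deriv (deriv z)) x))|
      ≤ T * (14 * (B * s * R)) := by
  have hs1 : s ≤ 1 := by linarith
  have hwx := (hws x).trans hs2
  have hsource : |deriv (deriv h) (w x) * deriv w x ^ 2 + deriv h (w x) * deriv (deriv w) x|
      ≤ 2 * (B * s * R) := by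
    have hB := hcoef.source.nonneg
    have hs0 := (abs_nonneg _).trans (hws x)
    calc _ ≤ |deriv (deriv h) (w x)| * (|deriv w x| * |deriv w x|)
          + |deriv h (w x) * deriv (deriv w) x| :=
          (abs_add_le _ _).trans_eq (by simp only [abs_mul, pow_two])
      _ ≤ B * (s * R) + B * s * R := by
          gcongr
          exacts [hcoef.source.abs_deriv_deriv_le _ hwx, hwR.abs_deriv_le_small,
            hwR.abs_deriv_le, hcoef.source.abs_deriv_mul_le_of_deriv_zero
              hcoef.deriv_source_zero (hws x) hs2 hwR.abs_deriv_deriv_le]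
      _ = 2 * (B * s * R) := by ring
  have hrem := abs_mul_add_mul_sub_le hT hκ0 hκ2
    (hcoef.advection.abs_deriv_deriv_comp_mul_le hwx hs1 hwR hyR)
    (hcoef.coupling.abs_deriv_deriv_comp_mul_le hwx hs1 hwR hzR) hsource
  rw [deriv_deriv_transportRate hcoef hw (fun x => (hws x).trans hs2) hy hz, ← abs_neg]
  convert hrem using 2 <;> ring

end Remainder

end TransportRate

end Coefficients

section EulerCoefficients

open Set Filter

variable (a K : ℝ)

/-- The coefficient of the transport terms `v ∂ₓv`, `v ∂ₓL` of the Euler system, as a function of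
the velocity. -/
noncomputable def advectionCoeff (u : ℝ) : ℝ := (1 - K) * u / (1 - K * u ^ 2)

/-- The coefficient of `∂ₓL` in the velocity equation, normalized to be `1` at rest. -/
noncomputable def pressureCoeff (u : ℝ) : ℝ := (1 - u ^ 2) ^ 2 / (1 - K * u ^ 2)

/-- The coefficient of `∂ₓv` in the density equation, normalized to be `1` at rest. -/
noncomputable def dilationCoeff (u : ℝ) : ℝ := 1 / (1 - K * u ^ 2)

/-- The cubic source term of the velocity equation, with `a = α (1 - 3K)`. -/
noncomputable def velocitySource (u : ℝ) : ℝ := a * (1 - K) * u ^ 3 / (1 - K * u ^ 2)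

/-- The quadratic source term of the density equation, with `a = α (1 - 3K)`. -/
noncomputable def densitySource (u : ℝ) : ℝ := a * (1 + K) * u ^ 2 / (1 - K * u ^ 2)

/-- The constant weight of the velocity derivatives in the energy. With `k = K / (1 + K)` the
strength of the pressure, `energyWeight K * k = 1 + K`, so that the highest-order coupling terms of
the two equations cancel. -/
noncomputable def energyWeight : ℝ := (1 + K) ^ 2 / K

/-- A common bound `B` for the coefficients of the Euler system and for the energy weight. -/
structure EulerCoeffBound (B : ℝ) : Prop where
  one_le : 1 ≤ B
  energyWeight_le : energyWeight K ≤ B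
  velocity : TransportCoeffs B (advectionCoeff K) (pressureCoeff K) (velocitySource a K)
  density : TransportCoeffs B (advectionCoeff K) (dilationCoeff K) (densitySource a K)

variable {K}

theorem one_sub_mul_sq_pos (hK1 : K < 1) {u : ℝ} (hu : u ∈ Ioo (-1 : ℝ) 1) :
    0 < 1 - K * u ^ 2 := by
  have hu2 : u ^ 2 < 1 := (sq_lt_one_iff_abs_lt_one u).mpr (abs_lt.mpr hu)
  nlinarith

theorem contDiffOn_div_one_sub_mul_sq (hK1 : K < 1) {p : ℝ → ℝ}
    (hp : ContDiff ℝ 2 p) : ContDiffOn ℝ 2 (fun u => p u / (1 - K * u ^ 2)) (Ioo (-1) 1) :=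
  hp.contDiffOn.div (by fun_prop) fun _ hu => (one_sub_mul_sq_pos hK1 hu).ne'

theorem deriv_sq_mul_div_zero {p : ℝ → ℝ} (hp : Differentiable ℝ p) :
    deriv (fun u => u ^ 2 * p u / (1 - K * u ^ 2)) 0 = 0 := by
  have hnum : HasDerivAt (fun u => u ^ 2 * p u) 0 0 :=
    ((hasDerivAt_pow 2 (0 : ℝ)).mul (hp 0).hasDerivAt).congr_deriv (by simp)
  have hden : HasDerivAt (fun u => 1 - K * u ^ 2) 0 0 :=
    (((hasDerivAt_pow 2 (0 : ℝ)).const_mul K).const_sub 1).congr_deriv (by simp)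
  exact ((hnum.div hden (by simp)).congr_deriv (by simp)).deriv

theorem deriv_velocitySource_zero : deriv (velocitySource a K) 0 = 0 := by
  convert deriv_sq_mul_div_zero (K := K) (p := fun u => a * (1 - K) * u) (by fun_prop) using 3
  rw [velocitySource]
  ring

theorem deriv_densitySource_zero : deriv (densitySource a K) 0 = 0 := by
  convert deriv_sq_mul_div_zero (K := K) (p := fun _ => a * (1 + K)) (by fun_prop) using 3
  rw [densitySource]
  ring

theorem exists_eulerCoeffBound (hK1 : K < 1) : ∃ B, EulerCoeffBound a K B := by
  have hC2 := fun {p : ℝ → ℝ} (hp : ContDiff ℝ 2 p) =>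
    eventually_boundedC2 (contDiffOn_div_one_sub_mul_sq hK1 hp)
  have hm := hC2 (p := fun u => (1 - K) * u) (by fun_prop)
  have hr := hC2 (p := fun u => (1 - u ^ 2) ^ 2) (by fun_prop)
  have hn := hC2 (p := fun _ => 1) (by fun_prop)
  have hf := hC2 (p := fun u => a * (1 - K) * u ^ 3) (by fun_prop)
  have hg := hC2 (p := fun u => a * (1 + K) * u ^ 2) (by fun_prop)
  obtain ⟨B, h1, hA, hm, hr, hn, hf, hg⟩ := ((eventually_ge_atTop 1).and
    ((eventually_ge_atTop (energyWeight K)).and (hm.and (hr.and (hn.and (hf.and hg)))))).exists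
  exact ⟨B, h1, hA,
    ⟨hm, hr, hf, by simp [advectionCoeff], by simp [pressureCoeff], by simp [velocitySource],
      deriv_velocitySource_zero a⟩,
    ⟨hm, hn, hg, by simp [advectionCoeff], by simp [dilationCoeff], by simp [densitySource],
      deriv_densitySource_zero a⟩⟩

theorem energyWeight_mul_pressure (hK0 : 0 < K) : energyWeight K * (K / (1 + K)) = 1 + K := by
  have : 1 + K ≠ 0 := by positivity
  rw [energyWeight]
  field_simp

theorem four_le_energyWeight (hK0 : 0 < K) : 4 ≤ energyWeight K := by
  rw [energyWeight, le_div_iff₀ hK0]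
  linarith [sq_nonneg (1 - K)]

/-- The time derivative of the velocity as a functional of the state `(u, ℓ)` at one time, where `d`
stands for `a / t` and `T` for `t ^ (-α)`. -/
noncomputable def velocityRate (a K d T : ℝ) (u ℓ : ℝ → ℝ) : ℝ → ℝ :=
  transportRate (advectionCoeff K) (pressureCoeff K) (velocitySource a K) d T (K / (1 + K)) u u ℓ

/-- The time derivative of the density variable as a functional of the state `(u, ℓ)`. -/
noncomputable def densityRate (a K T : ℝ) (u ℓ : ℝ → ℝ) : ℝ → ℝ :=
  transportRate (advectionCoeff K) (dilationCoeff K) (densitySource a K) 0 T (1 + K) u ℓ u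

theorem IsEulerSolution.pderivT_eq_velocityRate {α K : ℝ} {v L : ℝ → ℝ → ℝ}
    (hsol : IsEulerSolution α K v L) {t : ℝ} (ht : 1 ≤ t) :
    pderivT v t = velocityRate (α * (1 - 3 * K)) K (α * (1 - 3 * K) / t) (t ^ (-α)) (v t)
      (L t) := by
  funext x
  rw [(hsol t ht x).1]
  simp only [velocityRate, transportRate, advectionCoeff, pressureCoeff, velocitySource, pderivX]
  ring

theorem IsEulerSolution.pderivT_eq_densityRate {α K : ℝ} {v L : ℝ → ℝ → ℝ}
    (hsol : IsEulerSolution α K v L) {t : ℝ} (ht : 1 ≤ t) :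
    pderivT L t = densityRate (α * (1 - 3 * K)) K (t ^ (-α)) (v t) (L t) := by
  funext x
  rw [(hsol t ht x).2]
  simp only [densityRate, transportRate, advectionCoeff, dilationCoeff, densitySource, pderivX]
  ring

end EulerCoefficients

section States

open Real Function

/-- A `C³`, `2π`-periodic state `(u, ℓ)` of velocity and density variable. -/
structure PeriodicState (u ℓ : ℝ → ℝ) : Prop where
  contDiff_velocity : ContDiff ℝ 3 u
  contDiff_density : ContDiff ℝ 3 ℓ
  periodic_velocity : Periodic u (2 * π)
  periodic_density : Periodic ℓ (2 * π)

/-- A periodic state whose velocity and first derivatives are bounded by `s ≤ 1 / 2`. -/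
structure SmallState (s : ℝ) (u ℓ : ℝ → ℝ) : Prop extends PeriodicState u ℓ where
  le_half : s ≤ 1 / 2
  abs_velocity_le : ∀ x, |u x| ≤ s
  abs_deriv_velocity_le : ∀ x, |deriv u x| ≤ s
  abs_deriv_density_le : ∀ x, |deriv ℓ x| ≤ s

/-- The square of the pointwise size of a state and its derivatives, up to second order and without
the value of the density variable. -/
noncomputable def stateSq (u ℓ : ℝ → ℝ) (x : ℝ) : ℝ :=
  u x ^ 2 + deriv u x ^ 2 + deriv ℓ x ^ 2 + deriv (deriv u) x ^ 2 + deriv (deriv ℓ) x ^ 2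

variable {a K B d T s : ℝ} {u ℓ : ℝ → ℝ}

theorem stateSq_nonneg (u ℓ : ℝ → ℝ) (x : ℝ) : 0 ≤ stateSq u ℓ x := by
  rw [stateSq]
  positivity

theorem abs_velocity_le_sqrt_stateSq (u ℓ : ℝ → ℝ) (x : ℝ) : |u x| ≤ √(stateSq u ℓ x) := by
  refine abs_le_sqrt ?_
  rw [stateSq]
  linarith [sq_nonneg (deriv u x), sq_nonneg (deriv ℓ x), sq_nonneg (deriv (deriv u) x),
    sq_nonneg (deriv (deriv ℓ) x)]

namespace PeriodicState

variable (hst : PeriodicState u ℓ)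
include hst

theorem contDiff_velocity_two : ContDiff ℝ 2 u := hst.contDiff_velocity.of_le (by norm_num)

theorem contDiff_density_two : ContDiff ℝ 2 ℓ := hst.contDiff_density.of_le (by norm_num)

theorem contDiff_deriv_velocity : ContDiff ℝ 2 (deriv u) := ContDiff.deriv' hst.contDiff_velocity

theorem contDiff_deriv_density : ContDiff ℝ 2 (deriv ℓ) := ContDiff.deriv' hst.contDiff_density

theorem contDiff_deriv_deriv_velocity : ContDiff ℝ 1 (deriv (deriv u)) :=
  ContDiff.deriv' hst.contDiff_deriv_velocity

theorem contDiff_deriv_deriv_density : ContDiff ℝ 1 (deriv (deriv ℓ)) :=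
  ContDiff.deriv' hst.contDiff_deriv_density

theorem hasDerivAt_velocity (x : ℝ) : HasDerivAt u (deriv u x) x :=
  (hst.contDiff_velocity_two.differentiable two_ne_zero x).hasDerivAt

theorem hasDerivAt_deriv_velocity (x : ℝ) : HasDerivAt (deriv u) (deriv (deriv u) x) x :=
  (hst.contDiff_velocity_two.differentiable_deriv_two x).hasDerivAt

theorem hasDerivAt_density (x : ℝ) : HasDerivAt ℓ (deriv ℓ x) x :=
  (hst.contDiff_density_two.differentiable two_ne_zero x).hasDerivAt

theorem hasDerivAt_deriv_density (x : ℝ) : HasDerivAt (deriv ℓ) (deriv (deriv ℓ) x) x :=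
  (hst.contDiff_density_two.differentiable_deriv_two x).hasDerivAt

theorem hasDerivAt_deriv_deriv_velocity (x : ℝ) :
    HasDerivAt (deriv (deriv u)) (deriv (deriv (deriv u)) x) x :=
  (hst.contDiff_deriv_velocity.differentiable_deriv_two x).hasDerivAt

theorem hasDerivAt_deriv_deriv_density (x : ℝ) :
    HasDerivAt (deriv (deriv ℓ)) (deriv (deriv (deriv ℓ)) x) x :=
  (hst.contDiff_deriv_density.differentiable_deriv_two x).hasDerivAt

end PeriodicState

namespace SmallState

variable (hst : SmallState s u ℓ)
include hst

theorem jetBound_velocity (x : ℝ) : JetBound s √(stateSq u ℓ x) u x where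
  abs_deriv_le_small := hst.abs_deriv_velocity_le x
  abs_deriv_le := by
    refine abs_le_sqrt ?_
    rw [stateSq]
    linarith [sq_nonneg (u x), sq_nonneg (deriv ℓ x), sq_nonneg (deriv (deriv u) x),
      sq_nonneg (deriv (deriv ℓ) x)]
  abs_deriv_deriv_le := by
    refine abs_le_sqrt ?_
    rw [stateSq]
    linarith [sq_nonneg (u x), sq_nonneg (deriv u x), sq_nonneg (deriv ℓ x),
      sq_nonneg (deriv (deriv ℓ) x)]

theorem jetBound_density (x : ℝ) : JetBound s √(stateSq u ℓ x) ℓ x where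
  abs_deriv_le_small := hst.abs_deriv_density_le x
  abs_deriv_le := by
    refine abs_le_sqrt ?_
    rw [stateSq]
    linarith [sq_nonneg (u x), sq_nonneg (deriv u x), sq_nonneg (deriv (deriv u) x),
      sq_nonneg (deriv (deriv ℓ) x)]
  abs_deriv_deriv_le := by
    refine abs_le_sqrt ?_
    rw [stateSq]
    linarith [sq_nonneg (u x), sq_nonneg (deriv u x), sq_nonneg (deriv ℓ x),
      sq_nonneg (deriv (deriv u) x)]

theorem nonneg : 0 ≤ s := (abs_nonneg _).trans (hst.abs_velocity_le 0)

theorem abs_velocity_le_half (x : ℝ) : |u x| ≤ 1 / 2 := (hst.abs_velocity_le x).trans hst.le_half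

section RateEstimates

variable (hcoef : EulerCoeffBound a K B) (hK0 : 0 < K) (hK1 : K < 1) (hT : 0 ≤ T)
include hcoef hK0 hK1 hT

theorem abs_velocityRate_add_le {R : ℝ} {x : ℝ} (huR : |u x| ≤ R) (hu'R : |deriv u x| ≤ R)
    (hℓ'R : |deriv ℓ x| ≤ R) :
    |velocityRate a K d T u ℓ x + d * u x + T * (K / (1 + K)) * deriv ℓ x|
      ≤ T * (4 * (B * s * R)) :=
  abs_transportRate_add_le hcoef.velocity hT (by positivity)
    ((div_le_one (by positivity)).mpr (by linarith) |>.trans one_le_two) (hst.abs_velocity_le x)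
    hst.le_half huR hu'R hℓ'R

theorem abs_deriv_velocityRate_add_le (x : ℝ) :
    |deriv (velocityRate a K d T u ℓ) x + d * deriv u x
        + T * (K / (1 + K)) * deriv (deriv ℓ) x| ≤ T * (7 * (B * s * √(stateSq u ℓ x))) :=
  abs_deriv_transportRate_add_le hcoef.velocity hT (by positivity)
    ((div_le_one (by positivity)).mpr (by linarith) |>.trans one_le_two)
    hst.contDiff_velocity_two hst.abs_velocity_le hst.le_half hst.contDiff_velocity_two
    hst.contDiff_density_two (hst.jetBound_velocity x) (hst.jetBound_velocity x)
    (hst.jetBound_density x)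

theorem abs_deriv_deriv_velocityRate_add_le (x : ℝ) :
    |deriv (deriv (velocityRate a K d T u ℓ)) x + d * deriv (deriv u) x
        + T * (advectionCoeff K (u x) * deriv (deriv (deriv u)) x
          + K / (1 + K) * (pressureCoeff K (u x) * deriv (deriv (deriv ℓ)) x))|
      ≤ T * (14 * (B * s * √(stateSq u ℓ x))) :=
  abs_deriv_deriv_transportRate_add_le hcoef.velocity hT (by positivity)
    ((div_le_one (by positivity)).mpr (by linarith) |>.trans one_le_two)
    hst.contDiff_velocity_two hst.abs_velocity_le hst.le_half hst.contDiff_velocity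
    hst.contDiff_density (hst.jetBound_velocity x) (hst.jetBound_velocity x)
    (hst.jetBound_density x)

theorem abs_deriv_densityRate_add_le (x : ℝ) :
    |deriv (densityRate a K T u ℓ) x + T * (1 + K) * deriv (deriv u) x|
      ≤ T * (7 * (B * s * √(stateSq u ℓ x))) := by
  have hrem := abs_deriv_transportRate_add_le (d := 0) (κ := 1 + K) hcoef.density hT
    (by linarith) (by linarith) hst.contDiff_velocity_two hst.abs_velocity_le hst.le_half
    hst.contDiff_density_two hst.contDiff_velocity_two (hst.jetBound_velocity x)
    (hst.jetBound_density x) (hst.jetBound_velocity x)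
  rwa [zero_mul, add_zero] at hrem

theorem abs_deriv_deriv_densityRate_add_le (x : ℝ) :
    |deriv (deriv (densityRate a K T u ℓ)) x
        + T * (advectionCoeff K (u x) * deriv (deriv (deriv ℓ)) x
          + (1 + K) * (dilationCoeff K (u x) * deriv (deriv (deriv u)) x))|
      ≤ T * (14 * (B * s * √(stateSq u ℓ x))) := by
  have hrem := abs_deriv_deriv_transportRate_add_le (d := 0) (κ := 1 + K) hcoef.density hT
    (by linarith) (by linarith) hst.contDiff_velocity_two hst.abs_velocity_le hst.le_half
    hst.contDiff_density hst.contDiff_velocity (hst.jetBound_velocity x)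
    (hst.jetBound_density x) (hst.jetBound_velocity x)
  rwa [zero_mul, add_zero] at hrem

theorem abs_velocityRate_le (hd0 : 0 ≤ d) (hd : d ≤ T) (x : ℝ) :
    |velocityRate a K d T u ℓ x| ≤ 4 * (B * T * s) := by
  have hs := hst.nonneg
  have hk : |K / (1 + K)| ≤ 1 := by
    rw [abs_of_pos (by positivity), div_le_one (by positivity)]
    linarith
  have hrem := hst.abs_velocityRate_add_le (d := d) hcoef hK0 hK1 hT (hst.abs_velocity_le x)
    (hst.abs_deriv_velocity_le x) (hst.abs_deriv_density_le x)
  have hlin : |d * u x + T * (K / (1 + K)) * deriv ℓ x| ≤ 2 * (T * s) := by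
    calc _ ≤ |d * u x| + |T * (K / (1 + K)) * deriv ℓ x| := abs_add_le _ _
      _ ≤ T * s + T * 1 * s := by
        rw [abs_mul, abs_mul, abs_mul, abs_of_nonneg hd0, abs_of_nonneg hT]
        gcongr
        exacts [hst.abs_velocity_le x, hst.abs_deriv_density_le x]
      _ = 2 * (T * s) := by ring
  have hB : 2 * (T * s) ≤ 2 * (B * T * s) := by
    nlinarith [mul_nonneg hT hs, hcoef.one_le]
  have hss : T * (4 * (B * s * s)) ≤ 2 * (B * T * s) := by
    have h0 : 0 ≤ B * T * s := by
      have := hcoef.one_le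
      positivity
    nlinarith [hst.le_half]
  rw [abs_le] at *
  constructor <;> linarith

end RateEstimates

end SmallState

end States

section Energy

open Real Function

variable {a K B d T s : ℝ} {u ℓ : ℝ → ℝ}

/-- The energy density of a state. The weight `(1 - u²)²` of `(∂ₓ²ℓ)²` makes the highest-order
coupling terms of the two Euler equations cancel after an integration by parts. -/
noncomputable def energyDensity (K : ℝ) (u ℓ : ℝ → ℝ) (x : ℝ) : ℝ :=
  energyWeight K * deriv u x ^ 2 + deriv ℓ x ^ 2 + energyWeight K * deriv (deriv u) x ^ 2
    + (1 - u x ^ 2) ^ 2 * deriv (deriv ℓ) x ^ 2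

/-- The first variation of `energyDensity` at the state `(u, ℓ)` in the direction `(W, Z)`. -/
noncomputable def energyVariation (K : ℝ) (u ℓ W Z : ℝ → ℝ) (x : ℝ) : ℝ :=
  2 * energyWeight K * deriv u x * deriv W x + 2 * deriv ℓ x * deriv Z x
    + 2 * energyWeight K * deriv (deriv u) x * deriv (deriv W) x
    + (2 * (1 - u x ^ 2) ^ 2 * deriv (deriv ℓ) x * deriv (deriv Z) x
      - 4 * u x * (1 - u x ^ 2) * W x * deriv (deriv ℓ) x ^ 2)

/-- The flux of `energyDensity` along the Euler system. -/
noncomputable def energyFlux (K T : ℝ) (u ℓ : ℝ → ℝ) (x : ℝ) : ℝ :=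
  -T * (2 * (1 + K) * (deriv u x * deriv ℓ x)
    + energyWeight K * (advectionCoeff K (u x) * deriv (deriv u) x ^ 2)
    + advectionCoeff K (u x) * ((1 - u x ^ 2) ^ 2 * deriv (deriv ℓ) x ^ 2)
    + 2 * (1 + K) * (pressureCoeff K (u x) * (deriv (deriv u) x * deriv (deriv ℓ) x)))

theorem mul_mul_le_of_abs_le_sqrt {c p e C Q n : ℝ} (hQ : 0 ≤ Q) (hc : |c| ≤ C) (hp : |p| ≤ √Q)
    (he : |e| ≤ T * (n * (B * s * √Q))) : c * p * e ≤ n * C * (B * T * s) * Q := by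
  have hC := (abs_nonneg c).trans hc
  calc c * p * e ≤ |c| * |p| * |e| := (le_abs_self _).trans_eq (by simp only [abs_mul])
    _ ≤ C * √Q * (T * (n * (B * s * √Q))) := by gcongr
    _ = n * C * (B * T * s) * √Q ^ 2 := by ring
    _ = n * C * (B * T * s) * Q := by rw [sq_sqrt hQ]

theorem abs_one_sub_sq_le_one {y : ℝ} (hy : |y| ≤ 1 / 2) : |1 - y ^ 2| ≤ 1 := by
  rw [abs_le] at *
  constructor <;> nlinarith

theorem sq_one_sub_sq_mul_dilationCoeff (K u : ℝ) :
    (1 - u ^ 2) ^ 2 * dilationCoeff K u = pressureCoeff K u := by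
  rw [dilationCoeff, pressureCoeff, mul_one_div]

namespace SmallState

variable (hst : SmallState s u ℓ)
include hst

section EnergyEstimate

variable (hcoef : EulerCoeffBound a K B)
include hcoef

theorem deriv_energyFlux (x : ℝ) :
    deriv (energyFlux K T u ℓ) x =
      -T * (2 * (1 + K) * (deriv (deriv u) x * deriv ℓ x + deriv u x * deriv (deriv ℓ) x)
        + 2 * (energyWeight K * advectionCoeff K (u x)
            * (deriv (deriv u) x * deriv (deriv (deriv u)) x)
          + advectionCoeff K (u x) * (1 - u x ^ 2) ^ 2
            * (deriv (deriv ℓ) x * deriv (deriv (deriv ℓ)) x)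
          + (1 + K) * pressureCoeff K (u x) * (deriv (deriv (deriv u)) x * deriv (deriv ℓ) x
            + deriv (deriv u) x * deriv (deriv (deriv ℓ)) x))
        + deriv u x * (energyWeight K * (deriv (advectionCoeff K) (u x) * deriv (deriv u) x ^ 2)
          + (deriv (advectionCoeff K) (u x) * (1 - u x ^ 2) ^ 2
            - 4 * (advectionCoeff K (u x) * (u x * (1 - u x ^ 2)))) * deriv (deriv ℓ) x ^ 2
          + 2 * (1 + K) * (deriv (pressureCoeff K) (u x)
            * (deriv (deriv u) x * deriv (deriv ℓ) x)))) := by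
  have hm := hcoef.velocity.advection.hasDerivAt_comp hst.contDiff_velocity_two
    hst.abs_velocity_le_half x
  have hr := hcoef.velocity.coupling.hasDerivAt_comp hst.contDiff_velocity_two
    hst.abs_velocity_le_half x
  have hu' := hst.hasDerivAt_deriv_velocity x
  have hℓ' := hst.hasDerivAt_deriv_density x
  have hu'' := hst.hasDerivAt_deriv_deriv_velocity x
  have hℓ'' := hst.hasDerivAt_deriv_deriv_density x
  have hw := (((hst.hasDerivAt_velocity x).fun_pow 2).const_sub 1).fun_pow 2
  refine (((((hu'.mul hℓ').const_mul (2 * (1 + K))).add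
    ((hm.mul (hu''.fun_pow 2)).const_mul (energyWeight K))).add
    (hm.mul (hw.mul (hℓ''.fun_pow 2)))).add
    ((hr.mul (hu''.mul hℓ'')).const_mul (2 * (1 + K)))).const_mul (-T) |>.congr_deriv ?_ |>.deriv
  simp only [Nat.cast_ofNat, Nat.add_one_sub_one, pow_one, Pi.mul_apply]
  ring

variable (hK0 : 0 < K)
include hK0

theorem energyVariation_eq (W Z : ℝ → ℝ) (x : ℝ) :
    energyVariation K u ℓ W Z x =
      -(2 * d * energyWeight K * (deriv u x ^ 2 + deriv (deriv u) x ^ 2))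
      + deriv (energyFlux K T u ℓ) x
      + 2 * (energyWeight K * deriv u x
          * (deriv W x + d * deriv u x + T * (K / (1 + K)) * deriv (deriv ℓ) x)
        + 1 * deriv ℓ x * (deriv Z x + T * (1 + K) * deriv (deriv u) x)
        + energyWeight K * deriv (deriv u) x * (deriv (deriv W) x + d * deriv (deriv u) x
          + T * (advectionCoeff K (u x) * deriv (deriv (deriv u)) x
            + K / (1 + K) * (pressureCoeff K (u x) * deriv (deriv (deriv ℓ)) x)))
        + (1 - u x ^ 2) ^ 2 * deriv (deriv ℓ) x * (deriv (deriv Z) x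
          + T * (advectionCoeff K (u x) * deriv (deriv (deriv ℓ)) x
            + (1 + K) * (dilationCoeff K (u x) * deriv (deriv (deriv u)) x))))
      + 4 * (-(u x * (1 - u x ^ 2)) * W x * deriv (deriv ℓ) x ^ 2)
      + T * (deriv u x * (energyWeight K * (deriv (advectionCoeff K) (u x) * deriv (deriv u) x ^ 2)
          + (deriv (advectionCoeff K) (u x) * (1 - u x ^ 2) ^ 2
            - 4 * (advectionCoeff K (u x) * (u x * (1 - u x ^ 2)))) * deriv (deriv ℓ) x ^ 2
          + 2 * (1 + K) * (deriv (pressureCoeff K) (u x)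
            * (deriv (deriv u) x * deriv (deriv ℓ) x)))) := by
  rw [energyVariation, hst.deriv_energyFlux hcoef]
  linear_combination (-2 * T * (deriv u x * deriv (deriv ℓ) x + pressureCoeff K (u x)
      * (deriv (deriv u) x * deriv (deriv (deriv ℓ)) x))) * energyWeight_mul_pressure hK0
    - 2 * T * (1 + K) * (deriv (deriv ℓ) x * deriv (deriv (deriv u)) x)
      * sq_one_sub_sq_mul_dilationCoeff K (u x)

variable (hK1 : K < 1)
include hK1

theorem abs_transport_error_le (x : ℝ) :
    |deriv u x * (energyWeight K * (deriv (advectionCoeff K) (u x) * deriv (deriv u) x ^ 2)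
          + (deriv (advectionCoeff K) (u x) * (1 - u x ^ 2) ^ 2
            - 4 * (advectionCoeff K (u x) * (u x * (1 - u x ^ 2)))) * deriv (deriv ℓ) x ^ 2
          + 2 * (1 + K) * (deriv (pressureCoeff K) (u x)
            * (deriv (deriv u) x * deriv (deriv ℓ) x)))| ≤ 7 * (B ^ 2 * s * stateSq u ℓ x) := by
  have hu := hst.abs_velocity_le_half x
  have hR := hst.jetBound_velocity x
  have hR' := (hst.jetBound_density x).abs_deriv_deriv_le
  have hB := hcoef.one_le
  have hA0 := four_le_energyWeight hK0
  have hA := hcoef.energyWeight_le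
  have hw := abs_one_sub_sq_le_one hu
  have hm := hcoef.velocity.advection.abs_sub_apply_zero_le hu
  rw [hcoef.velocity.advection_zero, sub_zero] at hm
  have hm' := hcoef.velocity.advection.abs_deriv_le _ hu
  have hr' := hcoef.velocity.coupling.abs_deriv_le _ hu
  rw [← sq_sqrt (stateSq_nonneg u ℓ x)]
  set R := √(stateSq u ℓ x)
  calc _ ≤ |deriv u x| * (energyWeight K
          * (|deriv (advectionCoeff K) (u x)| * |deriv (deriv u) x| ^ 2)
        + (|deriv (advectionCoeff K) (u x)| * |1 - u x ^ 2| ^ 2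
          + 4 * (|advectionCoeff K (u x)| * (|u x| * |1 - u x ^ 2|))) * |deriv (deriv ℓ) x| ^ 2
        + 2 * (1 + K) * (|deriv (pressureCoeff K) (u x)|
          * (|deriv (deriv u) x| * |deriv (deriv ℓ) x|))) := by
        rw [abs_mul]
        grw [abs_add_le, abs_add_le]
        simp only [abs_mul]
        grw [abs_sub]
        simp only [abs_mul, abs_pow, Nat.abs_ofNat]
        rw [abs_of_pos (by linarith : 0 < energyWeight K), abs_of_pos (by linarith : 0 < 1 + K)]
    _ ≤ s * (B * (B * R ^ 2) + (B * 1 ^ 2 + 4 * (B * (1 / 2) * (1 / 2 * 1))) * R ^ 2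
        + 2 * (1 + 1) * (B * (R * R))) := by
        have hs := hst.nonneg
        have hu' := hst.abs_deriv_velocity_le x
        have hm2 := hm.trans (mul_le_mul_of_nonneg_left hu (by linarith))
        gcongr
        exacts [hR.abs_deriv_deriv_le, hR.abs_deriv_deriv_le]
    _ = (B ^ 2 + 6 * B) * (s * R ^ 2) := by ring
    _ ≤ 7 * B ^ 2 * (s * R ^ 2) := by
        have := hst.nonneg
        gcongr
        nlinarith
    _ = 7 * (B ^ 2 * s * R ^ 2) := by ring

theorem weight_error_le (hT : 0 ≤ T) (hd0 : 0 ≤ d) (hd : d ≤ T) (x : ℝ) :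
    -(u x * (1 - u x ^ 2)) * velocityRate a K d T u ℓ x * deriv (deriv ℓ) x ^ 2
      ≤ 2 * (B * T * s) * stateSq u ℓ x := by
  have hu := hst.abs_velocity_le_half x
  have hB := hcoef.one_le
  have hs := hst.nonneg
  calc _ ≤ |u x| * |1 - u x ^ 2| * |velocityRate a K d T u ℓ x| * |deriv (deriv ℓ) x| ^ 2 :=
        (le_abs_self _).trans_eq (by simp only [abs_mul, abs_neg, abs_pow])
    _ ≤ 1 / 2 * 1 * (4 * (B * T * s)) * √(stateSq u ℓ x) ^ 2 := by
        gcongr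
        exacts [abs_one_sub_sq_le_one hu, hst.abs_velocityRate_le hcoef hK0 hK1 hT hd0 hd x,
          (hst.jetBound_density x).abs_deriv_deriv_le]
    _ = 2 * (B * T * s) * stateSq u ℓ x := by
        rw [sq_sqrt (stateSq_nonneg u ℓ x)]
        ring

theorem energyVariation_le (hT : 0 ≤ T) (hd0 : 0 ≤ d) (hd : d ≤ T) (x : ℝ) :
    energyVariation K u ℓ (velocityRate a K d T u ℓ) (densityRate a K T u ℓ) x ≤
      -(2 * d * energyWeight K * (deriv u x ^ 2 + deriv (deriv u) x ^ 2))
      + deriv (energyFlux K T u ℓ) x + 99 * (B ^ 2 * T * s) * stateSq u ℓ x := by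
  have hQ := stateSq_nonneg u ℓ x
  have hA : |energyWeight K| ≤ B := by
    rw [abs_of_nonneg (by linarith [four_le_energyWeight hK0])]
    exact hcoef.energyWeight_le
  have hw : |(1 - u x ^ 2) ^ 2| ≤ 1 := by
    rw [abs_pow]
    exact pow_le_one₀ (abs_nonneg _) (abs_one_sub_sq_le_one (hst.abs_velocity_le_half x))
  have hjet := hst.jetBound_velocity x
  have hjet' := hst.jetBound_density x
  have hu' := mul_mul_le_of_abs_le_sqrt hQ hA hjet.abs_deriv_le
    (hst.abs_deriv_velocityRate_add_le (d := d) hcoef hK0 hK1 hT x)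
  have hu'' := mul_mul_le_of_abs_le_sqrt hQ hA hjet.abs_deriv_deriv_le
    (hst.abs_deriv_deriv_velocityRate_add_le (d := d) hcoef hK0 hK1 hT x)
  have hℓ' := mul_mul_le_of_abs_le_sqrt hQ abs_one.le hjet'.abs_deriv_le
    (hst.abs_deriv_densityRate_add_le hcoef hK0 hK1 hT x)
  have hℓ'' := mul_mul_le_of_abs_le_sqrt hQ hw hjet'.abs_deriv_deriv_le
    (hst.abs_deriv_deriv_densityRate_add_le hcoef hK0 hK1 hT x)
  have hweight := hst.weight_error_le hcoef hK0 hK1 hT hd0 hd x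
  have htransport := mul_le_mul_of_nonneg_left
    ((le_abs_self _).trans (hst.abs_transport_error_le hcoef hK0 hK1 x)) hT
  have hBB := mul_le_mul_of_nonneg_right (le_self_pow₀ hcoef.one_le two_ne_zero)
    (mul_nonneg (mul_nonneg hT hst.nonneg) hQ)
  rw [hst.energyVariation_eq (d := d) (T := T) hcoef hK0]
  linarith

end EnergyEstimate

end SmallState

end Energy

section Corrector

open Real Function

variable {a K B d T s : ℝ} {u ℓ : ℝ → ℝ}

/-- The density of the corrector. The Euler system damps the velocity only; the time derivative of
this mixed term produces the missing dissipation of the density variable. -/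
noncomputable def correctorDensity (u ℓ : ℝ → ℝ) (x : ℝ) : ℝ :=
  u x * deriv ℓ x - deriv (deriv u) x * deriv ℓ x

/-- The first variation of `correctorDensity` at the state `(u, ℓ)` in the direction `(W, Z)`. -/
noncomputable def correctorVariation (u ℓ W Z : ℝ → ℝ) (x : ℝ) : ℝ :=
  W x * deriv ℓ x + u x * deriv Z x
    - (deriv (deriv W) x * deriv ℓ x + deriv (deriv u) x * deriv Z x)

/-- The flux of `correctorDensity` along the Euler system. -/
noncomputable def correctorFlux (K T : ℝ) (u ℓ : ℝ → ℝ) (x : ℝ) : ℝ :=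
  T * (advectionCoeff K (u x) * (deriv (deriv u) x * deriv ℓ x)
    + K / (1 + K) * (pressureCoeff K (u x) * (deriv (deriv ℓ) x * deriv ℓ x))
    - (1 + K) * (u x * deriv u x))

namespace SmallState

variable (hst : SmallState s u ℓ) (hcoef : EulerCoeffBound a K B)
include hst hcoef

theorem deriv_correctorFlux (x : ℝ) :
    deriv (correctorFlux K T u ℓ) x =
      T * (deriv (advectionCoeff K) (u x) * deriv u x * (deriv (deriv u) x * deriv ℓ x)
        + advectionCoeff K (u x) * (deriv (deriv (deriv u)) x * deriv ℓ x
          + deriv (deriv u) x * deriv (deriv ℓ) x)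
        + K / (1 + K) * (deriv (pressureCoeff K) (u x) * deriv u x
            * (deriv (deriv ℓ) x * deriv ℓ x)
          + pressureCoeff K (u x) * (deriv (deriv (deriv ℓ)) x * deriv ℓ x
            + deriv (deriv ℓ) x * deriv (deriv ℓ) x))
        - (1 + K) * (deriv u x * deriv u x + u x * deriv (deriv u) x)) := by
  have hm := hcoef.velocity.advection.hasDerivAt_comp hst.contDiff_velocity_two
    hst.abs_velocity_le_half x
  have hr := hcoef.velocity.coupling.hasDerivAt_comp hst.contDiff_velocity_two
    hst.abs_velocity_le_half x
  have hu' := hst.hasDerivAt_deriv_velocity x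
  have hℓ' := hst.hasDerivAt_deriv_density x
  have hu'' := hst.hasDerivAt_deriv_deriv_velocity x
  have hℓ'' := hst.hasDerivAt_deriv_deriv_density x
  exact ((((hm.mul (hu''.mul hℓ')).add ((hr.mul (hℓ''.mul hℓ')).const_mul (K / (1 + K)))).sub
    (((hst.hasDerivAt_velocity x).mul hu').const_mul (1 + K))).const_mul T).deriv

variable (hK0 : 0 < K) (hK1 : K < 1)
include hK0 hK1

theorem abs_corrector_transport_error_le (x : ℝ) :
    |deriv (advectionCoeff K) (u x) * deriv u x * (deriv (deriv u) x * deriv ℓ x)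
        + advectionCoeff K (u x) * (deriv (deriv u) x * deriv (deriv ℓ) x)
        + K / (1 + K) * (deriv (pressureCoeff K) (u x) * deriv u x
            * (deriv (deriv ℓ) x * deriv ℓ x)
          + (pressureCoeff K (u x) - 1) * deriv (deriv ℓ) x ^ 2)|
      ≤ 4 * (B * s * stateSq u ℓ x) := by
  have hu := hst.abs_velocity_le_half x
  have hs := hst.nonneg
  have hB := hcoef.one_le
  have hjet := hst.jetBound_velocity x
  have hjet' := hst.jetBound_density x
  have hk : K / (1 + K) ≤ 1 := (div_le_one (by positivity)).mpr (by linarith)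
  have hm := hcoef.velocity.advection.abs_sub_apply_zero_le hu
  have hr := hcoef.velocity.coupling.abs_sub_apply_zero_le hu
  rw [hcoef.velocity.advection_zero, sub_zero] at hm
  rw [hcoef.velocity.coupling_zero] at hr
  have hus : B * |u x| ≤ B * s := by
    gcongr
    exact hst.abs_velocity_le x
  rw [← sq_sqrt (stateSq_nonneg u ℓ x)]
  set R := √(stateSq u ℓ x)
  calc _ ≤ |deriv (advectionCoeff K) (u x)| * |deriv u x| * (|deriv (deriv u) x| * |deriv ℓ x|)
        + |advectionCoeff K (u x)| * (|deriv (deriv u) x| * |deriv (deriv ℓ) x|)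
        + K / (1 + K) * (|deriv (pressureCoeff K) (u x)| * |deriv u x|
            * (|deriv (deriv ℓ) x| * |deriv ℓ x|)
          + |pressureCoeff K (u x) - 1| * |deriv (deriv ℓ) x| ^ 2) := by
        grw [abs_add_le, abs_add_le, abs_mul (K / (1 + K)), abs_add_le]
        simp only [abs_mul, abs_pow]
        rw [abs_of_pos (by positivity : 0 < K / (1 + K))]
    _ ≤ B * s * (R * R) + B * s * (R * R) + 1 * (B * s * (R * R) + B * s * R ^ 2) := by
        gcongr
        exacts [hcoef.velocity.advection.abs_deriv_le _ hu, hjet.abs_deriv_le_small,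
          hjet.abs_deriv_deriv_le, hjet'.abs_deriv_le, hm.trans hus, hjet.abs_deriv_deriv_le,
          hjet'.abs_deriv_deriv_le, hcoef.velocity.coupling.abs_deriv_le _ hu,
          hjet.abs_deriv_le_small, hjet'.abs_deriv_deriv_le, hjet'.abs_deriv_le, hr.trans hus,
          hjet'.abs_deriv_deriv_le]
    _ = 4 * (B * s * R ^ 2) := by ring

theorem correctorVariation_le (hT : 0 ≤ T) (x : ℝ) :
    correctorVariation u ℓ (velocityRate a K d T u ℓ) (densityRate a K T u ℓ) x ≤
      -d * correctorDensity u ℓ x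
      + T * ((1 + K) * (deriv u x ^ 2 + deriv (deriv u) x ^ 2)
        - K / (1 + K) * (deriv ℓ x ^ 2 + deriv (deriv ℓ) x ^ 2))
      + deriv (correctorFlux K T u ℓ) x + 36 * (B * T * s) * stateSq u ℓ x := by
  have hQ := stateSq_nonneg u ℓ x
  have hjet := hst.jetBound_velocity x
  have hjet' := hst.jetBound_density x
  have hu := abs_velocity_le_sqrt_stateSq u ℓ x
  have hW := mul_mul_le_of_abs_le_sqrt hQ abs_one.le hjet'.abs_deriv_le
    (hst.abs_velocityRate_add_le (d := d) hcoef hK0 hK1 hT hu hjet.abs_deriv_le hjet'.abs_deriv_le)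
  have hW'' := mul_mul_le_of_abs_le_sqrt hQ (abs_neg (1 : ℝ) ▸ abs_one.le) hjet'.abs_deriv_le
    (hst.abs_deriv_deriv_velocityRate_add_le (d := d) hcoef hK0 hK1 hT x)
  have hZ' := hst.abs_deriv_densityRate_add_le hcoef hK0 hK1 hT x
  have huZ' := mul_mul_le_of_abs_le_sqrt hQ abs_one.le hu hZ'
  have hu''Z' := mul_mul_le_of_abs_le_sqrt hQ (abs_neg (1 : ℝ) ▸ abs_one.le)
    hjet.abs_deriv_deriv_le hZ'
  have htransport := mul_le_mul_of_nonneg_left ((neg_le_abs _).trans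
    (hst.abs_corrector_transport_error_le hcoef hK0 hK1 x)) hT
  rw [correctorVariation, correctorDensity, hst.deriv_correctorFlux hcoef]
  linarith

theorem two_mul_velocityRate_le (hT : 0 ≤ T) (z x : ℝ) :
    2 * z * velocityRate a K d T u ℓ x ≤ deriv (fun x => -(2 * z * T * (K / (1 + K))) * ℓ x) x
      + (-(2 * d * z) * u x + 4 * (B * T * s) * (z ^ 2 + stateSq u ℓ x)) := by
  have hBTs : 0 ≤ B * T * s := mul_nonneg (mul_nonneg (by linarith [hcoef.one_le]) hT) hst.nonneg
  have hrem := hst.abs_velocityRate_add_le (d := d) hcoef hK0 hK1 hT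
    (abs_velocity_le_sqrt_stateSq u ℓ x) (hst.jetBound_velocity x).abs_deriv_le
    (hst.jetBound_density x).abs_deriv_le
  rw [((hst.hasDerivAt_density x).const_mul (-(2 * z * T * (K / (1 + K))))).deriv]
  set e := velocityRate a K d T u ℓ x + d * u x + T * (K / (1 + K)) * deriv ℓ x with he
  have hze : 2 * z * e ≤ 4 * (B * T * s) * (z ^ 2 + stateSq u ℓ x) := by
    calc 2 * z * e ≤ 2 * |z| * |e| := (le_abs_self _).trans_eq (by simp only [abs_mul, abs_two])
      _ ≤ 2 * |z| * (T * (4 * (B * s * √(stateSq u ℓ x)))) := by gcongr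
      _ = 4 * (B * T * s) * (2 * |z| * √(stateSq u ℓ x)) := by ring
      _ ≤ 4 * (B * T * s) * (|z| ^ 2 + √(stateSq u ℓ x) ^ 2) := by
          gcongr
          exact two_mul_le_add_sq _ _
      _ = 4 * (B * T * s) * (z ^ 2 + stateSq u ℓ x) := by
          rw [sq_abs, sq_sqrt (stateSq_nonneg u ℓ x)]
  linear_combination hze + 2 * z * he

end SmallState

end Corrector

section EnergyFunctionals

open Real Function intervalIntegral

variable {a K B d T s : ℝ} {u ℓ : ℝ → ℝ}

/-- The energy of a state, controlling the mean velocity and the derivatives of order one and two of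
both variables. -/
noncomputable def energy (K : ℝ) (u ℓ : ℝ → ℝ) : ℝ :=
  (∫ x in (0 : ℝ)..2 * π, u x) ^ 2 + ∫ x in (0 : ℝ)..2 * π, energyDensity K u ℓ x

/-- The integral of `correctorDensity`. -/
noncomputable def corrector (u ℓ : ℝ → ℝ) : ℝ :=
  ∫ x in (0 : ℝ)..2 * π, correctorDensity u ℓ x

theorem integral_mono_period {f g : ℝ → ℝ} (hf : Continuous f) (hg : Continuous g)
    (hfg : ∀ x, f x ≤ g x) : ∫ x in (0 : ℝ)..2 * π, f x ≤ ∫ x in (0 : ℝ)..2 * π, g x :=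
  integral_mono two_pi_pos.le (hf.intervalIntegrable _ _) (hg.intervalIntegrable _ _) hfg

namespace PeriodicState

section Comparison

variable (hst : PeriodicState u ℓ)
include hst

theorem continuous_jet : Continuous u ∧ Continuous (deriv u) ∧ Continuous (deriv (deriv u)) ∧
    Continuous (deriv ℓ) ∧ Continuous (deriv (deriv ℓ)) :=
  ⟨hst.contDiff_velocity.continuous, hst.contDiff_deriv_velocity.continuous,
    hst.contDiff_deriv_deriv_velocity.continuous, hst.contDiff_deriv_density.continuous,
    hst.contDiff_deriv_deriv_density.continuous⟩

theorem continuous_correctorDensity : Continuous (correctorDensity u ℓ) := by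
  obtain ⟨hu, -, hu'', hℓ', -⟩ := hst.continuous_jet
  unfold correctorDensity
  fun_prop

theorem continuous_stateSq : Continuous (stateSq u ℓ) := by
  obtain ⟨hu, hu', hu'', hℓ', hℓ''⟩ := hst.continuous_jet
  unfold stateSq
  fun_prop

theorem periodic_energyFlux (K T : ℝ) : Periodic (energyFlux K T u ℓ) (2 * π) := fun x => by
  have hu' := deriv_periodic hst.periodic_velocity
  have hℓ' := deriv_periodic hst.periodic_density
  rw [energyFlux, energyFlux, hst.periodic_velocity, hu', hℓ', deriv_periodic hu',
    deriv_periodic hℓ']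

theorem periodic_correctorFlux (K T : ℝ) : Periodic (correctorFlux K T u ℓ) (2 * π) := fun x => by
  have hu' := deriv_periodic hst.periodic_velocity
  have hℓ' := deriv_periodic hst.periodic_density
  rw [correctorFlux, correctorFlux, hst.periodic_velocity, hu', hℓ', deriv_periodic hu',
    deriv_periodic hℓ']

theorem integral_stateSq :
    ∫ x in (0 : ℝ)..2 * π, stateSq u ℓ x = L2normCirc u ^ 2 + L2normCirc (deriv u) ^ 2
      + L2normCirc (deriv ℓ) ^ 2 + L2normCirc (deriv (deriv u)) ^ 2
      + L2normCirc (deriv (deriv ℓ)) ^ 2 := by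
  obtain ⟨hu, hu', hu'', hℓ', hℓ''⟩ := hst.continuous_jet
  simp only [L2normCirc_sq]
  iterate 4 rw [← intervalIntegral.integral_add]
  · rfl
  all_goals exact Continuous.intervalIntegrable (by fun_prop) _ _

theorem energy_eq :
    energy K u ℓ = (∫ x in (0 : ℝ)..2 * π, u x) ^ 2
      + (energyWeight K * L2normCirc (deriv u) ^ 2 + L2normCirc (deriv ℓ) ^ 2
        + energyWeight K * L2normCirc (deriv (deriv u)) ^ 2
        + ∫ x in (0 : ℝ)..2 * π, (1 - u x ^ 2) ^ 2 * deriv (deriv ℓ) x ^ 2) := by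
  obtain ⟨hu, hu', hu'', hℓ', hℓ''⟩ := hst.continuous_jet
  simp only [L2normCirc_sq]
  iterate 2 rw [← intervalIntegral.integral_const_mul]
  iterate 3 rw [← intervalIntegral.integral_add]
  · rfl
  all_goals exact Continuous.intervalIntegrable (by fun_prop) _ _

theorem le_energy (hK0 : 0 < K) :
    (∫ x in (0 : ℝ)..2 * π, u x) ^ 2 + 4 * L2normCirc (deriv u) ^ 2 + L2normCirc (deriv ℓ) ^ 2
      + 4 * L2normCirc (deriv (deriv u)) ^ 2 ≤ energy K u ℓ := by
  have hA := four_le_energyWeight hK0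
  have hw : 0 ≤ ∫ x in (0 : ℝ)..2 * π, (1 - u x ^ 2) ^ 2 * deriv (deriv ℓ) x ^ 2 :=
    integral_nonneg two_pi_pos.le fun x _ => by positivity
  rw [hst.energy_eq]
  linarith [mul_le_mul_of_nonneg_right hA (sq_nonneg (L2normCirc (deriv u))),
    mul_le_mul_of_nonneg_right hA (sq_nonneg (L2normCirc (deriv (deriv u))))]

theorem energy_nonneg (hK0 : 0 < K) : 0 ≤ energy K u ℓ := by
  refine le_trans ?_ (hst.le_energy hK0)
  positivity

theorem sq_velocity_le_energy (hK0 : 0 < K) (x : ℝ) : u x ^ 2 ≤ 4 * energy K u ℓ := by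
  have hsob := sq_le_integral_sq_add_L2normCirc_deriv hst.periodic_velocity
    (hst.contDiff_velocity.of_le (by norm_num)) x
  have hE := hst.le_energy hK0
  have hπ : 4 * π * L2normCirc (deriv u) ^ 2 ≤ 16 * L2normCirc (deriv u) ^ 2 := by
    gcongr
    linarith [pi_lt_four]
  linarith [sq_nonneg (L2normCirc (deriv ℓ)), sq_nonneg (L2normCirc (deriv (deriv u))),
    sq_nonneg (∫ y in (0 : ℝ)..2 * π, u y)]

theorem abs_corrector_le (hK0 : 0 < K) : |corrector u ℓ| ≤ 10 * energy K u ℓ := by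
  obtain ⟨hu, -, hu'', hℓ', -⟩ := hst.continuous_jet
  have hpoint : ∀ x, |correctorDensity u ℓ x|
      ≤ 1 / 2 * (u x ^ 2 + 2 * deriv ℓ x ^ 2 + deriv (deriv u) x ^ 2) := fun x => by
    rw [correctorDensity, abs_le]
    constructor <;> linarith [sq_nonneg (u x + deriv ℓ x), sq_nonneg (u x - deriv ℓ x),
      sq_nonneg (deriv (deriv u) x + deriv ℓ x), sq_nonneg (deriv (deriv u) x - deriv ℓ x)]
  have hint : ∫ x in (0 : ℝ)..2 * π, 1 / 2 * (u x ^ 2 + 2 * deriv ℓ x ^ 2 + deriv (deriv u) x ^ 2)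
      = 1 / 2 * (L2normCirc u ^ 2 + 2 * L2normCirc (deriv ℓ) ^ 2
        + L2normCirc (deriv (deriv u)) ^ 2) := by
    simp only [L2normCirc_sq]
    rw [intervalIntegral.integral_const_mul, intervalIntegral.integral_add,
      intervalIntegral.integral_add, intervalIntegral.integral_const_mul]
    all_goals exact Continuous.intervalIntegrable (by fun_prop) _ _
  have hu2 := L2normCirc_sq_le_integral_sq_add hst.periodic_velocity
    (hst.contDiff_velocity.of_le (by norm_num))
  have hE := hst.le_energy hK0
  calc |corrector u ℓ| ≤ ∫ x in (0 : ℝ)..2 * π, |correctorDensity u ℓ x| :=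
        abs_integral_le_integral_abs two_pi_pos.le
    _ ≤ _ := integral_mono_period hst.continuous_correctorDensity.abs (by fun_prop) hpoint
    _ ≤ 10 * energy K u ℓ := by
        rw [hint]
        linarith [sq_nonneg (L2normCirc (deriv ℓ)), sq_nonneg (L2normCirc (deriv (deriv u))),
          sq_nonneg (∫ y in (0 : ℝ)..2 * π, u y)]

variable (hu : ∀ x, |u x| ≤ 1 / 2)
include hu

theorem integral_weight_mul_sq_le :
    ∫ x in (0 : ℝ)..2 * π, (1 - u x ^ 2) ^ 2 * deriv (deriv ℓ) x ^ 2
      ≤ L2normCirc (deriv (deriv ℓ)) ^ 2 := by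
  have huc := hst.contDiff_velocity.continuous
  have hℓ'' := hst.contDiff_deriv_deriv_density.continuous
  rw [L2normCirc_sq]
  refine integral_mono_period (by fun_prop) (by fun_prop) fun x => ?_
  exact mul_le_of_le_one_left (sq_nonneg _)
    ((sq_le_one_iff_abs_le_one _).mpr (abs_one_sub_sq_le_one (hu x)))

theorem L2normCirc_sq_le_integral_weight_mul_sq :
    L2normCirc (deriv (deriv ℓ)) ^ 2
      ≤ 2 * ∫ x in (0 : ℝ)..2 * π, (1 - u x ^ 2) ^ 2 * deriv (deriv ℓ) x ^ 2 := by
  have huc := hst.contDiff_velocity.continuous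
  have hℓ'' := hst.contDiff_deriv_deriv_density.continuous
  rw [L2normCirc_sq, ← intervalIntegral.integral_const_mul]
  refine integral_mono_period (by fun_prop) (by fun_prop) fun x => ?_
  have hu2 : u x ^ 2 ≤ (1 / 2) ^ 2 := sq_le_sq.mpr ((hu x).trans (le_abs_self _))
  have hw : 1 ≤ 2 * (1 - u x ^ 2) ^ 2 := by nlinarith
  rw [← mul_assoc]
  exact le_mul_of_one_le_left (sq_nonneg _) hw

theorem energy_le :
    energy K u ℓ ≤ (∫ x in (0 : ℝ)..2 * π, u x) ^ 2
      + energyWeight K * (L2normCirc (deriv u) ^ 2 + L2normCirc (deriv (deriv u)) ^ 2)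
      + (L2normCirc (deriv ℓ) ^ 2 + L2normCirc (deriv (deriv ℓ)) ^ 2) := by
  rw [hst.energy_eq]
  linarith [hst.integral_weight_mul_sq_le hu]

variable (hK0 : 0 < K)
include hK0

theorem coercive_le_energy :
    (∫ x in (0 : ℝ)..2 * π, u x) ^ 2 + 4 * L2normCirc (deriv u) ^ 2 + L2normCirc (deriv ℓ) ^ 2
      + 4 * L2normCirc (deriv (deriv u)) ^ 2 + 1 / 2 * L2normCirc (deriv (deriv ℓ)) ^ 2
      ≤ energy K u ℓ := by
  have hA := four_le_energyWeight hK0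
  rw [hst.energy_eq]
  linarith [hst.L2normCirc_sq_le_integral_weight_mul_sq hu,
    mul_le_mul_of_nonneg_right hA (sq_nonneg (L2normCirc (deriv u))),
    mul_le_mul_of_nonneg_right hA (sq_nonneg (L2normCirc (deriv (deriv u))))]

theorem integral_stateSq_le :
    2 * π * (∫ x in (0 : ℝ)..2 * π, u x) ^ 2 + ∫ x in (0 : ℝ)..2 * π, stateSq u ℓ x
      ≤ 21 * energy K u ℓ := by
  have hu2 := L2normCirc_sq_le_integral_sq_add hst.periodic_velocity
    (hst.contDiff_velocity.of_le (by norm_num))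
  have hz : 2 * π * (∫ x in (0 : ℝ)..2 * π, u x) ^ 2
      ≤ 8 * (∫ x in (0 : ℝ)..2 * π, u x) ^ 2 := by
    gcongr
    linarith [pi_lt_four]
  rw [hst.integral_stateSq]
  linarith [hst.coercive_le_energy hu hK0, sq_nonneg (L2normCirc (deriv u)),
    sq_nonneg (L2normCirc (deriv ℓ)), sq_nonneg (L2normCirc (deriv (deriv u))),
    sq_nonneg (L2normCirc (deriv (deriv ℓ))), sq_nonneg (∫ y in (0 : ℝ)..2 * π, u y)]

end Comparison

theorem smallState_of_energy_le (hst : PeriodicState u ℓ) (hK0 : 0 < K) {r : ℝ} (hr0 : 0 ≤ r)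
    (hr : r ≤ 1 / 12) (hE : energy K u ℓ ≤ r ^ 2) : SmallState (6 * r) u ℓ := by
  have hsmall : ∀ {y}, y ^ 2 ≤ 36 * r ^ 2 → |y| ≤ 6 * r := fun {y} hy =>
    abs_le_of_sq_le_sq (by linarith) (by positivity)
  have hu : ∀ x, |u x| ≤ 6 * r := fun x =>
    hsmall (by linarith [hst.sq_velocity_le_energy hK0 x, sq_nonneg r])
  have hcoer := hst.coercive_le_energy (fun x => (hu x).trans (by linarith)) hK0
  refine ⟨hst, by linarith, hu, fun x => hsmall ?_, fun x => hsmall ?_⟩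
  · have := sq_le_sixteen_mul_L2normCirc_deriv hst.periodic_velocity hst.contDiff_velocity_two x
    linarith [sq_nonneg (L2normCirc (deriv u)), sq_nonneg (L2normCirc (deriv ℓ)),
      sq_nonneg (L2normCirc (deriv (deriv ℓ))), sq_nonneg (∫ y in (0 : ℝ)..2 * π, u y),
      sq_nonneg r]
  · have := sq_le_sixteen_mul_L2normCirc_deriv hst.periodic_density hst.contDiff_density_two x
    linarith [sq_nonneg (L2normCirc (deriv u)), sq_nonneg (L2normCirc (deriv ℓ)),
      sq_nonneg (L2normCirc (deriv (deriv u))), sq_nonneg (∫ y in (0 : ℝ)..2 * π, u y),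
      sq_nonneg r]

end PeriodicState

namespace SmallState

variable (hst : SmallState s u ℓ) (hcoef : EulerCoeffBound a K B)
include hst hcoef

theorem contDiff_energyFlux : ContDiff ℝ 1 (energyFlux K T u ℓ) := by
  have hm : ContDiff ℝ 1 fun x => advectionCoeff K (u x) := (hcoef.velocity.advection.contDiff_comp
    hst.contDiff_velocity_two hst.abs_velocity_le_half).of_le one_le_two
  have hr : ContDiff ℝ 1 fun x => pressureCoeff K (u x) := (hcoef.velocity.coupling.contDiff_comp
    hst.contDiff_velocity_two hst.abs_velocity_le_half).of_le one_le_two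
  have hu : ContDiff ℝ 1 u := hst.contDiff_velocity.of_le (by norm_num)
  have hu' : ContDiff ℝ 1 (deriv u) := hst.contDiff_deriv_velocity.of_le one_le_two
  have hℓ' : ContDiff ℝ 1 (deriv ℓ) := hst.contDiff_deriv_density.of_le one_le_two
  have hu'' := hst.contDiff_deriv_deriv_velocity
  have hℓ'' := hst.contDiff_deriv_deriv_density
  unfold energyFlux
  fun_prop

theorem contDiff_correctorFlux : ContDiff ℝ 1 (correctorFlux K T u ℓ) := by
  have hm : ContDiff ℝ 1 fun x => advectionCoeff K (u x) := (hcoef.velocity.advection.contDiff_comp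
    hst.contDiff_velocity_two hst.abs_velocity_le_half).of_le one_le_two
  have hr : ContDiff ℝ 1 fun x => pressureCoeff K (u x) := (hcoef.velocity.coupling.contDiff_comp
    hst.contDiff_velocity_two hst.abs_velocity_le_half).of_le one_le_two
  have hu : ContDiff ℝ 1 u := hst.contDiff_velocity.of_le (by norm_num)
  have hu' : ContDiff ℝ 1 (deriv u) := hst.contDiff_deriv_velocity.of_le one_le_two
  have hℓ' : ContDiff ℝ 1 (deriv ℓ) := hst.contDiff_deriv_density.of_le one_le_two
  have hu'' := hst.contDiff_deriv_deriv_velocity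
  have hℓ'' := hst.contDiff_deriv_deriv_density
  unfold correctorFlux
  fun_prop

variable (hK0 : 0 < K) (hK1 : K < 1) (hT : 0 ≤ T)
include hK0 hK1 hT

theorem integral_energyVariation_le (hd0 : 0 ≤ d) (hd : d ≤ T)
    (hcont : Continuous
      (energyVariation K u ℓ (velocityRate a K d T u ℓ) (densityRate a K T u ℓ))) :
    ∫ x in (0 : ℝ)..2 * π,
        energyVariation K u ℓ (velocityRate a K d T u ℓ) (densityRate a K T u ℓ) x
      ≤ -(2 * d * energyWeight K * (L2normCirc (deriv u) ^ 2 + L2normCirc (deriv (deriv u)) ^ 2))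
        + 99 * (B ^ 2 * T * s) * ∫ x in (0 : ℝ)..2 * π, stateSq u ℓ x := by
  obtain ⟨-, hu', hu'', -, -⟩ := hst.continuous_jet
  have hQ := hst.continuous_stateSq
  refine (integral_le_of_le_deriv_add two_pi_pos.le (hst.periodic_energyFlux K T)
    (hst.contDiff_energyFlux hcoef) (by fun_prop) hcont
    (g := fun x => -(2 * d * energyWeight K) * (deriv u x ^ 2 + deriv (deriv u) x ^ 2)
      + 99 * (B ^ 2 * T * s) * stateSq u ℓ x)
    fun x => (hst.energyVariation_le hcoef hK0 hK1 hT hd0 hd x).trans_eq (by ring)).trans_eq ?_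
  rw [intervalIntegral.integral_add, intervalIntegral.integral_const_mul,
    intervalIntegral.integral_const_mul, intervalIntegral.integral_add, ← L2normCirc_sq,
    ← L2normCirc_sq]
  · ring
  all_goals exact Continuous.intervalIntegrable (by fun_prop) _ _

theorem integral_correctorVariation_le
    (hcont : Continuous
      (correctorVariation u ℓ (velocityRate a K d T u ℓ) (densityRate a K T u ℓ))) :
    ∫ x in (0 : ℝ)..2 * π,
        correctorVariation u ℓ (velocityRate a K d T u ℓ) (densityRate a K T u ℓ) x
      ≤ -d * corrector u ℓ
        + T * ((1 + K) * (L2normCirc (deriv u) ^ 2 + L2normCirc (deriv (deriv u)) ^ 2)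
          - K / (1 + K) * (L2normCirc (deriv ℓ) ^ 2 + L2normCirc (deriv (deriv ℓ)) ^ 2))
        + 36 * (B * T * s) * ∫ x in (0 : ℝ)..2 * π, stateSq u ℓ x := by
  obtain ⟨-, hu', hu'', hℓ', hℓ''⟩ := hst.continuous_jet
  have hQ := hst.continuous_stateSq
  have hG : Continuous (correctorDensity u ℓ) := hst.continuous_correctorDensity
  refine (integral_le_of_le_deriv_add two_pi_pos.le (hst.periodic_correctorFlux K T)
    (hst.contDiff_correctorFlux hcoef) (by fun_prop) hcont
    (g := fun x => -d * correctorDensity u ℓ x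
      + (T * (1 + K) * (deriv u x ^ 2 + deriv (deriv u) x ^ 2)
      - T * (K / (1 + K)) * (deriv ℓ x ^ 2 + deriv (deriv ℓ) x ^ 2))
      + 36 * (B * T * s) * stateSq u ℓ x)
    fun x => (hst.correctorVariation_le hcoef hK0 hK1 hT x).trans_eq (by ring)).trans_eq ?_
  rw [corrector, intervalIntegral.integral_add, intervalIntegral.integral_add,
    intervalIntegral.integral_sub]
  · simp only [intervalIntegral.integral_const_mul]
    rw [intervalIntegral.integral_add, intervalIntegral.integral_add]
    · simp only [L2normCirc_sq]
      ring
    all_goals exact Continuous.intervalIntegrable (by fun_prop) _ _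
  all_goals exact Continuous.intervalIntegrable (by fun_prop) _ _

theorem two_mul_integral_velocityRate_le (hcont : Continuous (velocityRate a K d T u ℓ)) :
    2 * (∫ x in (0 : ℝ)..2 * π, u x) * ∫ x in (0 : ℝ)..2 * π, velocityRate a K d T u ℓ x
      ≤ -(2 * d) * (∫ x in (0 : ℝ)..2 * π, u x) ^ 2
        + 4 * (B * T * s) * (2 * π * (∫ x in (0 : ℝ)..2 * π, u x) ^ 2
          + ∫ x in (0 : ℝ)..2 * π, stateSq u ℓ x) := by
  have hu := hst.contDiff_velocity.continuous
  have hℓ : ContDiff ℝ 1 ℓ := hst.contDiff_density.of_le (by norm_num)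
  have hQ := hst.continuous_stateSq
  set z := ∫ x in (0 : ℝ)..2 * π, u x with hz
  rw [← intervalIntegral.integral_const_mul]
  refine (integral_le_of_le_deriv_add two_pi_pos.le
    (f := fun x => -(2 * z * T * (K / (1 + K))) * ℓ x)
    (fun x => by simp only [hst.periodic_density x]) (by fun_prop) (by fun_prop) (by fun_prop)
    (hst.two_mul_velocityRate_le hcoef hK0 hK1 hT z)).trans_eq ?_
  rw [intervalIntegral.integral_add, intervalIntegral.integral_const_mul,
    intervalIntegral.integral_const_mul, intervalIntegral.integral_add,
    intervalIntegral.integral_const, ← hz, smul_eq_mul]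
  · ring
  all_goals exact Continuous.intervalIntegrable (by fun_prop) _ _

end SmallState

end EnergyFunctionals

section Evolution

open Real Function Set intervalIntegral

variable {a α K B d T s σ t : ℝ} {u ℓ : ℝ → ℝ} {v L : ℝ → ℝ → ℝ}

/-- The rate of change of `energy` along the Euler system, as a functional of the state. -/
noncomputable def energyRate (a K d T : ℝ) (u ℓ : ℝ → ℝ) : ℝ :=
  2 * (∫ x in (0 : ℝ)..2 * π, u x) * (∫ x in (0 : ℝ)..2 * π, velocityRate a K d T u ℓ x)
    + ∫ x in (0 : ℝ)..2 * π,
        energyVariation K u ℓ (velocityRate a K d T u ℓ) (densityRate a K T u ℓ) x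

/-- The rate of change of `corrector` along the Euler system, as a functional of the state. -/
noncomputable def correctorRate (a K d T : ℝ) (u ℓ : ℝ → ℝ) : ℝ :=
  ∫ x in (0 : ℝ)..2 * π,
    correctorVariation u ℓ (velocityRate a K d T u ℓ) (densityRate a K T u ℓ) x

/-- A state whose rates of change along the Euler system are continuous. -/
structure ContinuousRates (a K d T : ℝ) (u ℓ : ℝ → ℝ) : Prop where
  velocity : Continuous (velocityRate a K d T u ℓ)
  energy : Continuous
    (energyVariation K u ℓ (velocityRate a K d T u ℓ) (densityRate a K T u ℓ))
  corrector : Continuous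
    (correctorVariation u ℓ (velocityRate a K d T u ℓ) (densityRate a K T u ℓ))

namespace SmallState

variable (hst : SmallState s u ℓ) (hcoef : EulerCoeffBound a K B) (hK0 : 0 < K) (hK1 : K < 1)
  (hT : 0 ≤ T) (hcont : ContinuousRates a K d T u ℓ)
include hst hcoef hK0 hK1 hT hcont

theorem energyRate_le (hd0 : 0 ≤ d) (hd : d ≤ T) :
    energyRate a K d T u ℓ ≤ -(2 * d) * ((∫ x in (0 : ℝ)..2 * π, u x) ^ 2
        + energyWeight K * (L2normCirc (deriv u) ^ 2 + L2normCirc (deriv (deriv u)) ^ 2))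
      + 2163 * (B ^ 2 * T * s) * energy K u ℓ := by
  have hs := hst.nonneg
  have hmean := hst.two_mul_integral_velocityRate_le hcoef hK0 hK1 hT hcont.velocity
  have henergy := hst.integral_energyVariation_le hcoef hK0 hK1 hT hd0 hd hcont.energy
  have hQ := hst.integral_stateSq_le hst.abs_velocity_le_half hK0
  set Q := ∫ x in (0 : ℝ)..2 * π, stateSq u ℓ x
  set z := ∫ x in (0 : ℝ)..2 * π, u x
  have hQ0 : 0 ≤ Q := integral_nonneg two_pi_pos.le fun x _ => stateSq_nonneg u ℓ x
  have hz0 : 0 ≤ 2 * π * z ^ 2 := by positivity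
  have hB := hcoef.one_le
  have herror : 4 * (B * T * s) * (2 * π * z ^ 2 + Q) + 99 * (B ^ 2 * T * s) * Q
      ≤ 2163 * (B ^ 2 * T * s) * energy K u ℓ :=
    calc 4 * (B * T * s) * (2 * π * z ^ 2 + Q) + 99 * (B ^ 2 * T * s) * Q
        ≤ 4 * (B ^ 2 * T * s) * (2 * π * z ^ 2 + Q)
          + 99 * (B ^ 2 * T * s) * (2 * π * z ^ 2 + Q) := by
          gcongr
          · exact le_self_pow₀ hB two_ne_zero
          · linarith
      _ = 103 * (B ^ 2 * T * s) * (2 * π * z ^ 2 + Q) := by ring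
      _ ≤ 103 * (B ^ 2 * T * s) * (21 * energy K u ℓ) := by gcongr
      _ = _ := by ring
  rw [energyRate]
  linarith

theorem correctorRate_le :
    correctorRate a K d T u ℓ ≤ -d * corrector u ℓ
        + T * ((1 + K) * (L2normCirc (deriv u) ^ 2 + L2normCirc (deriv (deriv u)) ^ 2)
          - K / (1 + K) * (L2normCirc (deriv ℓ) ^ 2 + L2normCirc (deriv (deriv ℓ)) ^ 2))
      + 756 * (B ^ 2 * T * s) * energy K u ℓ := by
  have hs := hst.nonneg
  have hcorr := hst.integral_correctorVariation_le hcoef hK0 hK1 hT hcont.corrector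
  have hQ := hst.integral_stateSq_le hst.abs_velocity_le_half hK0
  set Q := ∫ x in (0 : ℝ)..2 * π, stateSq u ℓ x
  have hQ0 : 0 ≤ Q := integral_nonneg two_pi_pos.le fun x _ => stateSq_nonneg u ℓ x
  have hz0 : 0 ≤ 2 * π * (∫ x in (0 : ℝ)..2 * π, u x) ^ 2 := by positivity
  have hB := hcoef.one_le
  have herror : 36 * (B * T * s) * Q ≤ 756 * (B ^ 2 * T * s) * energy K u ℓ :=
    calc 36 * (B * T * s) * Q ≤ 36 * (B ^ 2 * T * s) * (21 * energy K u ℓ) := by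
          gcongr
          · exact le_self_pow₀ hB two_ne_zero
          · linarith
      _ = _ := by ring
  rw [correctorRate]
  linarith

theorem energyRate_le_mul_energy (hd0 : 0 ≤ d) (hd : d ≤ T) :
    energyRate a K d T u ℓ ≤ 2163 * (B ^ 2 * T * s) * energy K u ℓ := by
  have hrate := hst.energyRate_le hcoef hK0 hK1 hT hcont hd0 hd
  have hA := (four_le_energyWeight hK0).trans' zero_le_four
  have hdamp : 0 ≤ 2 * d * ((∫ x in (0 : ℝ)..2 * π, u x) ^ 2
      + energyWeight K * (L2normCirc (deriv u) ^ 2 + L2normCirc (deriv (deriv u)) ^ 2)) := by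
    positivity
  linarith

/-- The choice `σ T k = d`, with `k = K / (1 + K)`, splits the damping of the velocity evenly
between the velocity and the density variable. -/
theorem energyRate_add_mul_correctorRate_le (hd0 : 0 ≤ d) (hd : d ≤ T) (hσ0 : 0 ≤ σ)
    (hσ : σ * T * (K / (1 + K)) = d) :
    energyRate a K d T u ℓ + σ * correctorRate a K d T u ℓ
      ≤ -d * (energy K u ℓ + σ * corrector u ℓ)
        + (2163 + 756 * σ) * (B ^ 2 * T * s) * energy K u ℓ := by
  have henergy := hst.energyRate_le hcoef hK0 hK1 hT hcont hd0 hd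
  have hcorr := mul_le_mul_of_nonneg_left (hst.correctorRate_le hcoef hK0 hK1 hT hcont) hσ0
  have hE := mul_le_mul_of_nonneg_left (hst.energy_le (K := K) hst.abs_velocity_le_half) hd0
  have hz : 0 ≤ d * (∫ x in (0 : ℝ)..2 * π, u x) ^ 2 := by positivity
  have hσA : σ * T * (1 + K) = d * energyWeight K := by
    rw [← energyWeight_mul_pressure hK0, ← hσ]
    ring
  have hexpand : σ * (T * ((1 + K) * (L2normCirc (deriv u) ^ 2 + L2normCirc (deriv (deriv u)) ^ 2)
      - K / (1 + K) * (L2normCirc (deriv ℓ) ^ 2 + L2normCirc (deriv (deriv ℓ)) ^ 2)))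
      = d * energyWeight K * (L2normCirc (deriv u) ^ 2 + L2normCirc (deriv (deriv u)) ^ 2)
        - d * (L2normCirc (deriv ℓ) ^ 2 + L2normCirc (deriv (deriv ℓ)) ^ 2) := by
    rw [← hσA, ← hσ]
    ring
  linarith

theorem modifiedEnergyRate_le (hd0 : 0 ≤ d) (hd : d ≤ T) (hσ0 : 0 ≤ σ)
    (hσ : σ * T * (K / (1 + K)) = d) :
    energyRate a K d T u ℓ + σ * (10 * energyRate a K d T u ℓ + correctorRate a K d T u ℓ)
      ≤ -d * (energy K u ℓ + σ * (10 * energy K u ℓ + corrector u ℓ))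
        + (2500 * (1 + 10 * σ) * (B ^ 2 * T * s) + 10 * (d * σ)) * energy K u ℓ := by
  have hrate := mul_le_mul_of_nonneg_left
    (hst.energyRate_le_mul_energy hcoef hK0 hK1 hT hcont hd0 hd) hσ0
  have hcomb := hst.energyRate_add_mul_correctorRate_le hcoef hK0 hK1 hT hcont hd0 hd hσ0 hσ
  have hs := hst.nonneg
  have hE := hst.energy_nonneg hK0
  have hX : 0 ≤ B ^ 2 * T * s * energy K u ℓ := by positivity
  linarith [mul_nonneg hσ0 hX]

end SmallState

/-- A `2π`-periodic solution of class `C³` of the Euler system on `[1, ∞) × ℝ`. -/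
structure IsPeriodicEulerSolution (α K : ℝ) (v L : ℝ → ℝ → ℝ) : Prop where
  contDiff_velocity : ContDiffSlab 3 v
  contDiff_density : ContDiffSlab 3 L
  periodic_velocity : ∀ t, Periodic (v t) (2 * π)
  periodic_density : ∀ t, Periodic (L t) (2 * π)
  isEulerSolution : IsEulerSolution α K v L

namespace IsPeriodicEulerSolution

variable (hsol : IsPeriodicEulerSolution α K v L)
include hsol

theorem periodicState (ht : 1 ≤ t) : PeriodicState (v t) (L t) :=
  ⟨hsol.contDiff_velocity.contDiff_slice ht, hsol.contDiff_density.contDiff_slice ht,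
    hsol.periodic_velocity t, hsol.periodic_density t⟩

theorem contDiffSlab_jet : ContDiffSlab 1 v ∧ ContDiffSlab 1 (pderivX v) ∧
    ContDiffSlab 1 (pderivX (pderivX v)) ∧ ContDiffSlab 1 (pderivX L) ∧
    ContDiffSlab 1 (pderivX (pderivX L)) := by
  have hv' : ContDiffSlab 2 (pderivX v) := ContDiffSlab.pderivX (n := 2) hsol.contDiff_velocity
  have hL' : ContDiffSlab 2 (pderivX L) := ContDiffSlab.pderivX (n := 2) hsol.contDiff_density
  exact ⟨hsol.contDiff_velocity.of_le (by norm_num), hv'.of_le one_le_two,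
    ContDiffSlab.pderivX (n := 1) hv', hL'.of_le one_le_two, ContDiffSlab.pderivX (n := 1) hL'⟩

theorem contDiffSlab_energyDensity : ContDiffSlab 1 fun t => energyDensity K (v t) (L t) := by
  obtain ⟨hv, hv', hv'', hL', hL''⟩ := hsol.contDiffSlab_jet
  unfold ContDiffSlab at *
  change ContDiffOn ℝ 1 (fun p => energyWeight K * uncurry (pderivX v) p ^ 2
    + uncurry (pderivX L) p ^ 2 + energyWeight K * uncurry (pderivX (pderivX v)) p ^ 2
    + (1 - uncurry v p ^ 2) ^ 2 * uncurry (pderivX (pderivX L)) p ^ 2) _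
  fun_prop

theorem contDiffSlab_correctorDensity : ContDiffSlab 1 fun t => correctorDensity (v t) (L t) := by
  obtain ⟨hv, -, hv'', hL', -⟩ := hsol.contDiffSlab_jet
  unfold ContDiffSlab at *
  change ContDiffOn ℝ 1 (fun p => uncurry v p * uncurry (pderivX L) p
    - uncurry (pderivX (pderivX v)) p * uncurry (pderivX L) p) _
  fun_prop

theorem pderivT_energyDensity (ht : 1 < t) :
    pderivT (fun t => energyDensity K (v t) (L t)) t
      = energyVariation K (v t) (L t) (pderivT v t) (pderivT L t) := by
  funext x
  have hv := hsol.contDiff_velocity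
  have hL := hsol.contDiff_density
  have hv₀ := hsol.contDiffSlab_jet.1.hasDerivAt_pderivT ht x
  have hv₁ := (hv.of_le (m := 2) (by norm_num)).hasDerivAt_deriv ht x
  have hL₁ := (hL.of_le (m := 2) (by norm_num)).hasDerivAt_deriv ht x
  have hv₂ := hv.hasDerivAt_deriv_deriv ht x
  have hL₂ := hL.hasDerivAt_deriv_deriv ht x
  refine (((((hv₁.pow 2).const_mul (energyWeight K)).add (hL₁.pow 2)).add
    ((hv₂.pow 2).const_mul (energyWeight K))).add
    ((((hv₀.pow 2).const_sub 1).pow 2).mul (hL₂.pow 2))).congr_deriv ?_ |>.deriv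
  simp only [energyVariation, Pi.pow_apply]
  push_cast
  ring

theorem pderivT_correctorDensity (ht : 1 < t) :
    pderivT (fun t => correctorDensity (v t) (L t)) t
      = correctorVariation (v t) (L t) (pderivT v t) (pderivT L t) := by
  funext x
  have hv₀ := hsol.contDiffSlab_jet.1.hasDerivAt_pderivT ht x
  have hL₁ := (hsol.contDiff_density.of_le (m := 2) (by norm_num)).hasDerivAt_deriv ht x
  have hv₂ := hsol.contDiff_velocity.hasDerivAt_deriv_deriv ht x
  exact ((hv₀.mul hL₁).sub (hv₂.mul hL₁)).deriv

theorem continuousRates (ht : 1 < t) :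
    ContinuousRates (α * (1 - 3 * K)) K (α * (1 - 3 * K) / t) (t ^ (-α)) (v t) (L t) := by
  have hE := hsol.contDiffSlab_energyDensity.continuous_pderivT ht
  have hG := hsol.contDiffSlab_correctorDensity.continuous_pderivT ht
  have hv := hsol.contDiffSlab_jet.1.continuous_pderivT ht
  rw [hsol.pderivT_energyDensity ht] at hE
  rw [hsol.pderivT_correctorDensity ht] at hG
  rw [hsol.isEulerSolution.pderivT_eq_velocityRate ht.le] at hE hG hv
  rw [hsol.isEulerSolution.pderivT_eq_densityRate ht.le] at hE hG
  exact ⟨hv, hE, hG⟩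

theorem hasDerivAt_energy (ht : 1 < t) :
    HasDerivAt (fun t => energy K (v t) (L t))
      (energyRate (α * (1 - 3 * K)) K (α * (1 - 3 * K) / t) (t ^ (-α)) (v t) (L t)) t := by
  have hmean := hsol.contDiffSlab_jet.1.hasDerivAt_integral ht 0 (2 * π)
  have hE := hsol.contDiffSlab_energyDensity.hasDerivAt_integral ht 0 (2 * π)
  refine ((hmean.pow 2).add hE).congr_deriv ?_
  rw [energyRate, ← hsol.isEulerSolution.pderivT_eq_velocityRate ht.le,
    ← hsol.isEulerSolution.pderivT_eq_densityRate ht.le, hsol.pderivT_energyDensity ht]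
  push_cast
  ring

theorem hasDerivAt_corrector (ht : 1 < t) :
    HasDerivAt (fun t => corrector (v t) (L t))
      (correctorRate (α * (1 - 3 * K)) K (α * (1 - 3 * K) / t) (t ^ (-α)) (v t) (L t)) t := by
  refine (hsol.contDiffSlab_correctorDensity.hasDerivAt_integral ht 0 (2 * π)).congr_deriv ?_
  rw [correctorRate, ← hsol.isEulerSolution.pderivT_eq_velocityRate ht.le,
    ← hsol.isEulerSolution.pderivT_eq_densityRate ht.le, hsol.pderivT_correctorDensity ht]

theorem continuousOn_energy : ContinuousOn (fun t => energy K (v t) (L t)) (Ici 1) :=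
  ((hsol.contDiff_velocity.continuousOn_integral 0 (2 * π)).pow 2).add
    (hsol.contDiffSlab_energyDensity.continuousOn_integral 0 (2 * π))

theorem continuousOn_corrector : ContinuousOn (fun t => corrector (v t) (L t)) (Ici 1) :=
  hsol.contDiffSlab_correctorDensity.continuousOn_integral 0 (2 * π)

end IsPeriodicEulerSolution

end Evolution

section ModifiedEnergy

open Real Set

variable {α K B t : ℝ} {v L : ℝ → ℝ → ℝ}

/-- The strength of the corrector in `modifiedEnergy`: the ratio of the damping coefficient
`α (1 - 3K)` of the velocity to the strength `K / (1 + K)` of the pressure. -/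
noncomputable def correctorStrength (α K : ℝ) : ℝ := α * (1 - 3 * K) / (K / (1 + K))

/-- The Lyapunov functional of the Euler system: the energy plus a corrector of relative size
`t ^ (α - 1)`. The coefficient `10` keeps it above the energy, see
`PeriodicState.abs_corrector_le`. -/
noncomputable def modifiedEnergy (α K : ℝ) (v L : ℝ → ℝ → ℝ) (t : ℝ) : ℝ :=
  energy K (v t) (L t) + correctorStrength α K * t ^ (α - 1)
    * (10 * energy K (v t) (L t) + corrector (v t) (L t))

theorem correctorStrength_nonneg (hα : 0 ≤ α) (hK0 : 0 < K) (hK3 : K < 1 / 3) :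
    0 ≤ correctorStrength α K :=
  div_nonneg (mul_nonneg hα (by linarith)) (by positivity)

theorem correctorStrength_mul_rpow (hK0 : 0 < K) (ht : 0 < t) :
    correctorStrength α K * t ^ (α - 1) * t ^ (-α) * (K / (1 + K)) = α * (1 - 3 * K) / t := by
  have hpow : t ^ (α - 1) * t ^ (-α) = 1 / t := by
    rw [← rpow_add ht, one_div, ← rpow_neg_one]
    ring_nf
  have hk : K / (1 + K) ≠ 0 := by positivity
  rw [mul_assoc (correctorStrength α K), hpow, correctorStrength]
  field_simp

theorem div_le_rpow_neg {a : ℝ} (ha : a ≤ 1) (hα1 : α ≤ 1) (ht : 1 ≤ t) : a / t ≤ t ^ (-α) :=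
  calc a / t ≤ t ^ (-1 : ℝ) := by
        rw [rpow_neg_one, ← one_div]
        gcongr
    _ ≤ t ^ (-α) := rpow_le_rpow_of_exponent_le ht (neg_le_neg hα1)

theorem div_mul_rpow_le {a c : ℝ} (ha : a ≤ 1) (hc : 0 ≤ c) (ht : 0 < t) :
    a / t * (c * t ^ (α - 1)) ≤ c * t ^ (α - 2) := by
  have hpow : t ^ (α - 2) = t ^ (α - 1) / t := by
    rw [← rpow_sub_one ht.ne']
    ring_nf
  calc a / t * (c * t ^ (α - 1)) ≤ 1 / t * (c * t ^ (α - 1)) := by gcongr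
    _ = c * t ^ (α - 2) := by rw [hpow]; ring

namespace PeriodicState

variable {u ℓ : ℝ → ℝ} (hst : PeriodicState u ℓ) (hK0 : 0 < K)
include hst hK0

theorem ten_mul_energy_add_corrector_nonneg : 0 ≤ 10 * energy K u ℓ + corrector u ℓ := by
  linarith [(abs_le.mp (hst.abs_corrector_le hK0)).1]

theorem ten_mul_energy_add_corrector_le :
    10 * energy K u ℓ + corrector u ℓ ≤ 20 * energy K u ℓ := by
  linarith [(abs_le.mp (hst.abs_corrector_le hK0)).2]

end PeriodicState

namespace IsPeriodicEulerSolution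

section

variable (hsol : IsPeriodicEulerSolution α K v L) (hα0 : 0 ≤ α) (hK0 : 0 < K) (hK3 : K < 1 / 3)
include hsol hα0 hK0 hK3

theorem energy_le_modifiedEnergy (ht : 1 ≤ t) :
    energy K (v t) (L t) ≤ modifiedEnergy α K v L t := by
  have hc := correctorStrength_nonneg hα0 hK0 hK3
  have hEG := (hsol.periodicState ht).ten_mul_energy_add_corrector_nonneg hK0
  have : 0 ≤ t := zero_le_one.trans ht
  exact le_add_of_nonneg_right (by positivity)

theorem modifiedEnergy_one_le :
    modifiedEnergy α K v L 1 ≤ (1 + 20 * correctorStrength α K) * energy K (v 1) (L 1) := by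
  have hEG := mul_le_mul_of_nonneg_left
    ((hsol.periodicState le_rfl).ten_mul_energy_add_corrector_le hK0)
    (correctorStrength_nonneg hα0 hK0 hK3)
  rw [modifiedEnergy, one_rpow, mul_one]
  linarith

end

variable (hsol : IsPeriodicEulerSolution α K v L)
include hsol

theorem continuousOn_modifiedEnergy : ContinuousOn (modifiedEnergy α K v L) (Ici 1) := by
  have hE := hsol.continuousOn_energy
  have hpow : ContinuousOn (fun t : ℝ => t ^ (α - 1)) (Ici 1) := fun t ht =>
    (continuousAt_rpow_const t _ (.inl (zero_lt_one.trans_le ht).ne')).continuousWithinAt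
  exact hE.add ((continuousOn_const.mul hpow).mul
    ((continuousOn_const.mul hE).add hsol.continuousOn_corrector))

theorem hasDerivAt_modifiedEnergy (ht : 1 < t) :
    HasDerivAt (modifiedEnergy α K v L)
      (energyRate (α * (1 - 3 * K)) K (α * (1 - 3 * K) / t) (t ^ (-α)) (v t) (L t)
        + (correctorStrength α K * ((α - 1) * t ^ (α - 1 - 1))
            * (10 * energy K (v t) (L t) + corrector (v t) (L t))
          + correctorStrength α K * t ^ (α - 1)
            * (10 * energyRate (α * (1 - 3 * K)) K (α * (1 - 3 * K) / t) (t ^ (-α)) (v t) (L t)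
              + correctorRate (α * (1 - 3 * K)) K (α * (1 - 3 * K) / t) (t ^ (-α)) (v t) (L t))))
      t := by
  have hE := hsol.hasDerivAt_energy ht
  have hpow := hasDerivAt_rpow_const (p := α - 1) (.inl (zero_lt_one.trans ht).ne')
  exact hE.add ((hpow.const_mul (correctorStrength α K)).mul
    ((hE.const_mul 10).add (hsol.hasDerivAt_corrector ht)))

theorem deriv_modifiedEnergy_le (hcoef : EulerCoeffBound (α * (1 - 3 * K)) K B) (hα0 : 0 ≤ α)
    (hα1 : α ≤ 1) (hK0 : 0 < K) (hK3 : K < 1 / 3) (ht : 1 < t)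
    (hsmall : √(modifiedEnergy α K v L t) ≤ 1 / 12) :
    deriv (modifiedEnergy α K v L) t ≤ -(α * (1 - 3 * K) / t) * modifiedEnergy α K v L t
      + (15000 * (1 + 10 * correctorStrength α K) * B ^ 2 * (t ^ (-α)
          * √(modifiedEnergy α K v L t))
        + 10 * correctorStrength α K * t ^ (α - 2)) * modifiedEnergy α K v L t := by
  set Φ := modifiedEnergy α K v L t
  set c := correctorStrength α K
  have ht0 : 0 < t := zero_lt_one.trans ht
  have hstate := hsol.periodicState ht.le
  have hc : 0 ≤ c := correctorStrength_nonneg hα0 hK0 hK3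
  have hE0 := hstate.energy_nonneg hK0
  have hEΦ : energy K (v t) (L t) ≤ Φ := hsol.energy_le_modifiedEnergy hα0 hK0 hK3 ht.le
  have ha0 : 0 ≤ α * (1 - 3 * K) := mul_nonneg hα0 (by linarith)
  have ha1 : α * (1 - 3 * K) ≤ 1 := mul_le_one₀ hα1 (by linarith) (by linarith)
  have hτ : t ^ (α - 1) ≤ 1 := rpow_le_one_of_one_le_of_nonpos ht.le (by linarith)
  have hst : SmallState (6 * √Φ) (v t) (L t) :=
    hstate.smallState_of_energy_le hK0 (sqrt_nonneg _) hsmall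
      (hEΦ.trans_eq (sq_sqrt (hE0.trans hEΦ)).symm)
  have hrate := hst.modifiedEnergyRate_le hcoef hK0 (by linarith) (rpow_nonneg ht0.le (-α))
    (hsol.continuousRates ht) (div_nonneg ha0 ht0.le) (div_le_rpow_neg ha1 hα1 ht.le)
    (by positivity) (correctorStrength_mul_rpow hK0 ht0)
  have hdecreasing : c * ((α - 1) * t ^ (α - 1 - 1))
      * (10 * energy K (v t) (L t) + corrector (v t) (L t)) ≤ 0 :=
    mul_nonpos_of_nonpos_of_nonneg
      (mul_nonpos_of_nonneg_of_nonpos hc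
        (mul_nonpos_of_nonpos_of_nonneg (by linarith) (by positivity)))
      (hstate.ten_mul_energy_add_corrector_nonneg hK0)
  have hdσ := div_mul_rpow_le (α := α) ha1 hc ht0
  have herror : (2500 * (1 + 10 * (c * t ^ (α - 1))) * (B ^ 2 * t ^ (-α) * (6 * √Φ))
        + 10 * (α * (1 - 3 * K) / t * (c * t ^ (α - 1)))) * energy K (v t) (L t)
      ≤ (2500 * (1 + 10 * c) * (B ^ 2 * t ^ (-α) * (6 * √Φ)) + 10 * (c * t ^ (α - 2))) * Φ := by
    gcongr
    exact mul_le_of_le_one_right hc hτ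
  rw [(hsol.hasDerivAt_modifiedEnergy ht).deriv]
  rw [← modifiedEnergy] at hrate
  linarith

end IsPeriodicEulerSolution

end ModifiedEnergy

section Stability

open Real Set

variable {α K η r t : ℝ} {v L : ℝ → ℝ → ℝ}

theorem PeriodicState.energy_le_of_norm_le {u ℓ : ℝ → ℝ} (hst : PeriodicState u ℓ) (hK0 : 0 < K)
    {N : ℝ} (hN : N ≤ 1 / 9) (hmean : |∫ x in (0 : ℝ)..2 * π, u x| ≤ N)
    (hu' : L2normCirc (deriv u) ≤ N) (hu'' : L2normCirc (deriv (deriv u)) ≤ N)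
    (hℓ' : L2normCirc (deriv ℓ) ≤ N) (hℓ'' : L2normCirc (deriv (deriv ℓ)) ≤ N) :
    energy K u ℓ ≤ 5 * energyWeight K * N ^ 2 := by
  have hN0 : 0 ≤ N := (abs_nonneg _).trans hmean
  have hA := four_le_energyWeight hK0
  have hsq : ∀ {g : ℝ → ℝ}, L2normCirc g ≤ N → L2normCirc g ^ 2 ≤ N ^ 2 := fun {g} hg =>
    pow_le_pow_left₀ (sqrt_nonneg _) hg 2
  have hz := sq_le_sq' (neg_le_of_abs_le hmean) (le_of_abs_le hmean)
  have hu : ∀ x, |u x| ≤ 1 / 2 := fun x => by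
    have hsob := sq_le_integral_sq_add_L2normCirc_deriv hst.periodic_velocity
      (hst.contDiff_velocity.of_le (by norm_num)) x
    refine abs_le_of_sq_le_sq (hsob.trans ?_) (by norm_num)
    have hmass : N ^ 2 ≤ (1 / 9) ^ 2 := pow_le_pow_left₀ hN0 hN 2
    have hslope : 4 * π * L2normCirc (deriv u) ^ 2 ≤ 16 * N ^ 2 :=
      mul_le_mul (by linarith [pi_lt_four]) (hsq hu') (sq_nonneg _) (by norm_num)
    linarith
  have hweighted := mul_le_mul_of_nonneg_left (add_le_add (hsq hu') (hsq hu''))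
    (zero_le_four.trans hA)
  linarith [hst.energy_le (K := K) hu, hsq hℓ', hsq hℓ'', sq_nonneg N,
    mul_le_mul_of_nonneg_right hA (sq_nonneg N)]

theorem PeriodicState.sum_L2normCirc_le {u ℓ : ℝ → ℝ} (hst : PeriodicState u ℓ) (hK0 : 0 < K)
    (hu : ∀ x, |u x| ≤ 1 / 2) :
    L2normCirc (deriv u) + L2normCirc (deriv (deriv u)) + L2normCirc (deriv ℓ)
      + L2normCirc (deriv (deriv ℓ)) ≤ 5 * √(energy K u ℓ) := by
  have hcoer := hst.coercive_le_energy hu hK0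
  have hz := sq_nonneg (∫ x in (0 : ℝ)..2 * π, u x)
  have hu' := sq_nonneg (L2normCirc (deriv u))
  have hu'' := sq_nonneg (L2normCirc (deriv (deriv u)))
  have hℓ' := sq_nonneg (L2normCirc (deriv ℓ))
  have hℓ'' := sq_nonneg (L2normCirc (deriv (deriv ℓ)))
  have h₁ : L2normCirc (deriv u) ≤ √(energy K u ℓ) := le_sqrt_of_sq_le (by linarith)
  have h₂ : L2normCirc (deriv (deriv u)) ≤ √(energy K u ℓ) := le_sqrt_of_sq_le (by linarith)
  have h₃ : L2normCirc (deriv ℓ) ≤ √(energy K u ℓ) := le_sqrt_of_sq_le (by linarith)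
  have h₄ : L2normCirc (deriv (deriv ℓ)) / 2 ≤ √(energy K u ℓ) := le_sqrt_of_sq_le (by linarith)
  linarith

theorem exists_modifiedEnergy_one_lt (hα0 : 0 ≤ α) (hK0 : 0 < K) (hK3 : K < 1 / 3)
    (hη : 0 < η) :
    ∃ ε > 0, ∀ v L : ℝ → ℝ → ℝ, IsPeriodicEulerSolution α K v L →
      |meanVel v 1| + sobolevNorm2 v L 1 < ε → modifiedEnergy α K v L 1 < η := by
  have hc := correctorStrength_nonneg hα0 hK0 hK3
  have hA := zero_lt_four.trans_le (four_le_energyWeight hK0)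
  set H := (1 + 20 * correctorStrength α K) * (5 * energyWeight K)
  have hH0 : 0 < H := by positivity
  refine ⟨min (1 / 9) (η / H), by positivity, fun v L hsol hsmall => ?_⟩
  obtain ⟨hN9, hNη⟩ := lt_min_iff.mp hsmall
  rw [sobolevNorm2] at hN9 hNη
  set N := |meanVel v 1| + _
  have hmean : 0 ≤ |meanVel v 1| := abs_nonneg _
  have hv' : 0 ≤ L2normCirc (deriv (v 1)) := sqrt_nonneg _
  have hv'' : 0 ≤ L2normCirc (deriv (deriv (v 1))) := sqrt_nonneg _
  have hL' : 0 ≤ L2normCirc (deriv (L 1)) := sqrt_nonneg _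
  have hL'' : 0 ≤ L2normCirc (deriv (deriv (L 1))) := sqrt_nonneg _
  have hN0 : 0 ≤ N := by positivity
  calc modifiedEnergy α K v L 1
      ≤ (1 + 20 * correctorStrength α K) * energy K (v 1) (L 1) :=
        hsol.modifiedEnergy_one_le hα0 hK0 hK3
    _ ≤ (1 + 20 * correctorStrength α K) * (5 * energyWeight K * N ^ 2) := by
        gcongr
        exact (hsol.periodicState le_rfl).energy_le_of_norm_le hK0 hN9.le
          (by rw [← meanVel]; linarith) (by linarith) (by linarith) (by linarith) (by linarith)
    _ ≤ H * N := by
        rw [← mul_assoc]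
        gcongr
        exact pow_le_of_le_one hN0 (by linarith) two_ne_zero
    _ < η := by rwa [lt_div_iff₀' hH0] at hNη

theorem IsPeriodicEulerSolution.sobolevNorm2_le_of_modifiedEnergy_le
    (hsol : IsPeriodicEulerSolution α K v L) (hα0 : 0 ≤ α) (hK0 : 0 < K) (hK3 : K < 1 / 3)
    (ht : 1 ≤ t) (hr0 : 0 ≤ r) (hr : r ≤ 1 / 12) (hΦ : modifiedEnergy α K v L t ≤ r ^ 2) :
    sobolevNorm2 v L t ≤ 5 * r := by
  have hE := (hsol.energy_le_modifiedEnergy hα0 hK0 hK3 ht).trans hΦ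
  have hst := (hsol.periodicState ht).smallState_of_energy_le hK0 hr0 hr hE
  calc sobolevNorm2 v L t ≤ 5 * √(energy K (v t) (L t)) :=
        hst.sum_L2normCirc_le hK0 hst.abs_velocity_le_half
    _ ≤ 5 * r := by
        gcongr
        exact sqrt_le_iff.mpr ⟨hr0, hE⟩

theorem stability_decay_sobolev_general (hK0 : 0 < K) (hK3 : K < 1 / 3) (hα1 : α < 1)
    (hstab : (1 - K) * α > 2 / 3) :
    ∃ ε > 0, ∃ C > 0, ∀ v L : ℝ → ℝ → ℝ, IsPeriodicEulerSolution α K v L →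
      |meanVel v 1| + sobolevNorm2 v L 1 < ε →
      ∀ t, 1 ≤ t → sobolevNorm2 v L t ≤ C * t ^ (-(α * (1 - 3 * K)) / 2) := by
  have hα0 : 0 ≤ α := ((mul_pos_iff_of_pos_left (by linarith)).mp (lt_trans (by norm_num) hstab)).le
  have ha0 : 0 ≤ α * (1 - 3 * K) := mul_nonneg hα0 (by linarith)
  have hc := correctorStrength_nonneg hα0 hK0 hK3
  obtain ⟨B, hcoef⟩ := exists_eulerCoeffBound (α * (1 - 3 * K)) (K := K) (by linarith)
  obtain ⟨η, hη, hdecay⟩ := exists_decay_threshold (p := α) (q := 2 - α) (r := 1 / 12)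
    (C₁ := 15000 * (1 + 10 * correctorStrength α K) * B ^ 2)
    (C₂ := 10 * correctorStrength α K) ha0 (by linarith) (by linarith) (by norm_num)
    (by positivity) (by positivity)
  obtain ⟨ε, hε, hinitial⟩ := exists_modifiedEnergy_one_lt hα0 hK0 hK3 hη
  refine ⟨ε, hε, 5 / 12, by norm_num, fun v L hsol hsmall t ht => ?_⟩
  have ht0 : 0 < t := zero_lt_one.trans_le ht
  have hΦ := hdecay (modifiedEnergy α K v L) hsol.continuousOn_modifiedEnergy
    (fun s hs => (hsol.hasDerivAt_modifiedEnergy hs).differentiableAt)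
    (fun s hs hsΦ => by
      rw [neg_sub]
      exact hsol.deriv_modifiedEnergy_le hcoef hα0 hα1.le hK0 hK3 hs hsΦ)
    (hinitial v L hsol hsmall) t ht
  have hpow : t ^ (-(α * (1 - 3 * K)) / 2) ≤ 1 :=
    rpow_le_one_of_one_le_of_nonpos ht (by linarith)
  refine (hsol.sobolevNorm2_le_of_modifiedEnergy_le (r := 1 / 12 * t ^ (-(α * (1 - 3 * K)) / 2))
    hα0 hK0 hK3 ht (by positivity) (by linarith) (hΦ.trans_eq ?_)).trans_eq (by ring)
  rw [mul_pow, ← rpow_mul_natCast ht0.le]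
  ring_nf

end Stability

/-- In the stable regime `(1−K)α > 2/3`, `0 < K < 1/3`, small perturbations of the quiet
fluid decay in the second-order Sobolev norm at the rate `t^(−α(1−3K)/2+δ)`. -/
theorem stability_decay_sobolev
    (α K : ℝ) (hK0 : 0 < K) (hK3 : K < 1 / 3) (hα0 : 0 < α) (hα1 : α < 1)
    (hstab : (1 - K) * α > 2 / 3) (δ : ℝ) (hδ : 0 < δ) :
    ∃ ε > 0, ∃ C > 0, ∀ v L : ℝ → ℝ → ℝ,
      ContDiffOn ℝ (⊤ : ℕ∞) (fun p : ℝ × ℝ => v p.1 p.2) (Set.Ici 1 ×ˢ Set.univ) →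
      ContDiffOn ℝ (⊤ : ℕ∞) (fun p : ℝ × ℝ => L p.1 p.2) (Set.Ici 1 ×ˢ Set.univ) →
      (∀ t x, v t (x + 2 * Real.pi) = v t x) →
      (∀ t x, L t (x + 2 * Real.pi) = L t x) →
      IsEulerSolution α K v L →
      |meanVel v 1| + sobolevNorm2 v L 1 < ε →
      ∀ t, 1 ≤ t → sobolevNorm2 v L t ≤ C * t ^ (-(α * (1 - 3 * K)) / 2 + δ) := by
  obtain ⟨ε, hε, C, hC, hdecay⟩ := stability_decay_sobolev_general hK0 hK3 hα1 hstab
  refine ⟨ε, hε, C, hC, fun v L hv hL hpv hpL hsol hsmall t ht => ?_⟩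
  refine (hdecay v L ⟨contDiffOn_infty.mp hv 3, contDiffOn_infty.mp hL 3, hpv, hpL, hsol⟩
    hsmall t ht).trans ?_
  gcongr
  exact le_add_of_nonneg_right hδ.le
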